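/- Suppose h(u) > 0 for all u ∈ [0,1] and H(1) ≤ (k(p) ∫₀¹ D(u)^{p'−1} g(u) du)^{1/p'}. Then there exists a unique c* > −h_m such that the traveling-wave problem with speed c* admits a solution, and this unique speed satisfies c* > 0 > −h_m. -/

import Mathlib

open Set MeasureTheory Filter

/-- The conjugate exponent `p' = p/(p-1)`. -/
noncomputable def pconj (p : ℝ) : ℝ := p / (p - 1)

/-- The constant `k(p)` from the paper. -/
noncomputable def kfun (p : ℝ) : ℝ :=
  if p < 2 then 1 / (2 ^ (pconj p - 1) - 1)
  else if p = 2 then 1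
  else pconj p / (pconj p - 1 +
    (1 + pconj p * (pconj p - 1) ^ ((1 : ℝ) / (pconj p - 2)) +
      (pconj p - 1) ^ (pconj p / (pconj p - 2))) /
    (1 + (pconj p - 1) ^ ((1 : ℝ) / (pconj p - 2))) ^ pconj p)

/-- Standing assumptions on the data `p, θ, D, H, h, g` (combustion setting). -/
structure CombSetup (p θ : ℝ) (D H h g : ℝ → ℝ) : Prop where
  hp : 1 < p
  hθ0 : 0 < θ
  hθ1 : θ < 1
  hD : ContDiffOn ℝ 1 D (Ioo 0 1)
  hDpos : ∀ v ∈ Ioo (0 : ℝ) 1, 0 < D v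
  hH : ContDiffOn ℝ 1 H (Icc 0 1)
  hH0 : H 0 = 0
  hh : ContinuousOn h (Icc 0 1)
  hHd : ∀ v ∈ Icc (0 : ℝ) 1, HasDerivWithinAt H (h v) (Icc 0 1) v
  hgc : ContinuousOn g (Icc 0 1)
  hg0 : ∀ v ∈ Icc (0 : ℝ) θ, g v = 0
  hgpos : ∀ v ∈ Ioo θ 1, 0 < g v
  hg1 : g 1 = 0
  hInt : IntegrableOn (fun v => D v ^ (pconj p - 1) * g v) (Ioo 0 1)

/-- The diffusive flux `ξ ↦ D(u(ξ)) |u'(ξ)|^{p-2} u'(ξ)`. -/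
noncomputable def flux (p : ℝ) (D u : ℝ → ℝ) : ℝ → ℝ :=
  fun ξ => D (u ξ) * (|deriv u ξ| ^ (p - 2) * deriv u ξ)

/-- Solution of the traveling-wave problem with speed `c`. -/
structure IsTWSol (p c : ℝ) (D h g : ℝ → ℝ) (u : ℝ → ℝ) : Prop where
  cont : Continuous u
  mem : ∀ ξ, u ξ ∈ Icc (0 : ℝ) 1
  smooth : ContDiffOn ℝ 1 u {ξ | u ξ ∈ Ioo (0 : ℝ) 1}
  eqn : ∀ ξ ∈ {ξ | u ξ ∈ Ioo (0 : ℝ) 1},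
    HasDerivAt (flux p D u) (-(c + h (u ξ)) * deriv u ξ - g (u ξ)) ξ
  flux_cont : Continuous (fun ξ => if u ξ ∈ Ioo (0 : ℝ) 1 then flux p D u ξ else 0)
  flux_to0 : ∀ ε > 0, ∃ δ > 0, ∀ ξ, u ξ ∈ Ioo (0 : ℝ) 1 → u ξ < δ → |flux p D u ξ| < ε
  flux_to1 : ∀ ε > 0, ∃ δ > 0, ∀ ξ, u ξ ∈ Ioo (0 : ℝ) 1 → 1 - δ < u ξ → |flux p D u ξ| < ε
  lim_bot : Tendsto u atBot (nhds 1)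
  lim_top : Tendsto u atTop (nhds 0)

/-- Positive solution of the first-order problem with parameter `c`. -/
structure IsFOSol (p c : ℝ) (D h g : ℝ → ℝ) (y : ℝ → ℝ) : Prop where
  cont : ContinuousOn y (Icc 0 1)
  eqn : ∀ v ∈ Ioo (0 : ℝ) 1, HasDerivAt y
    (pconj p * ((c + h v) * (max (y v) 0) ^ (1 / p) - D v ^ (pconj p - 1) * g v)) v
  y0 : y 0 = 0
  y1 : y 1 = 0
  pos : ∀ v ∈ Ioo (0 : ℝ) 1, 0 < y v

/-!
Along a wave the flux is nonpositive, and as a function of the height `v = u ξ` the quantity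
`y = |flux| ^ p'` solves `y' = p' ((c + h) y₊ ^ (1 / p) - D ^ (p' - 1) g)` with `y 1 = 0`.
The right-hand side is nondecreasing in `y`, so this backward problem is well posed although it is
not Lipschitz at `y = 0`, and its solution `y_c` is nonincreasing and Lipschitz in `c`. On `[0, θ]`
there is no reaction and a wave forces `y = (c v + H v) ^ p'`. Hence the admissible speeds are the
zeros of the strictly decreasing function `c ↦ y_c θ - (c θ + H θ) ^ p'`, which is negative for
large `c`. Were it nonpositive at a speed `c` with `K v = c v + H v`, comparison on `[θ, 1]` would
give `y_c ^ (1 / p') ≤ K` there, and integrating `y_c'` would give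
`p' ∫ D ^ (p' - 1) g ≤ K 1 ^ p'`; at `c = 0` this contradicts the bound on `H 1` because
`k(p) < p'`. Conversely, from such a `y` the profile is recovered by inverting the primitive of
`-D ^ (p' - 1) / y ^ (1 / p)`.
-/

/-! ### Monotonicity from derivative conditions on part of the range -/

theorem exists_mapsTo_Ioo_of_le_of_le {f : ℝ → ℝ} {a b p q : ℝ} (hab : a ≤ b)
    (hf : ContinuousOn f (Icc a b)) (hpq : p < q) (ha : f a ≤ p) (hb : q ≤ f b) :
    ∃ α ∈ Icc a b, ∃ β ∈ Icc a b, α < β ∧ f α ≤ p ∧ q ≤ f β ∧ MapsTo f (Ioo α β) (Ioo p q) := by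
  obtain ⟨β, ⟨hβ, hqβ⟩, hβmin⟩ := (isCompact_Icc.of_isClosed_subset
    (hf.preimage_isClosed_of_isClosed isClosed_Icc (isClosed_Ici (a := q)))
    inter_subset_left).exists_isLeast ⟨b, right_mem_Icc.2 hab, hb⟩
  have hfβ : ContinuousOn f (Icc a β) := hf.mono (Icc_subset_Icc_right hβ.2)
  obtain ⟨α, ⟨hα, hαp⟩, hαmax⟩ := (isCompact_Icc.of_isClosed_subset
    (hfβ.preimage_isClosed_of_isClosed isClosed_Icc (isClosed_Iic (a := p)))
    inter_subset_left).exists_isGreatest ⟨a, left_mem_Icc.2 hβ.1, ha⟩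
  have hαβ : α < β := hα.2.lt_of_ne (by rintro rfl; exact hpq.not_ge (hqβ.trans hαp))
  refine ⟨α, ⟨hα.1, hα.2.trans hβ.2⟩, β, hβ, hαβ, hαp, hqβ, fun x hx => ⟨?_, ?_⟩⟩
  · by_contra! hxp
    exact (hαmax ⟨⟨hα.1.trans hx.1.le, hx.2.le⟩, hxp⟩).not_gt hx.1
  · by_contra! hxq
    exact (hβmin ⟨⟨hα.1.trans hx.1.le, hx.2.le.trans hβ.2⟩, hxq⟩).not_gt hx.2

-- An increase of `f` would cross an interval of values inside `U`, where `f` is nonincreasing.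
theorem antitoneOn_of_hasDerivAt_nonpos_of_dense {f : ℝ → ℝ} {s U : Set ℝ} (hs : s.OrdConnected)
    (hf : ContinuousOn f s) (hU : IsOpen U) (hUd : Dense U)
    (hf' : ∀ x ∈ interior s, f x ∈ U → ∃ d ≤ 0, HasDerivAt f d x) : AntitoneOn f s := by
  intro x hx y hy hxy
  by_contra! hlt
  obtain ⟨r, hrI, hrU⟩ := hUd.inter_open_nonempty _ isOpen_Ioo (nonempty_Ioo.2 hlt)
  obtain ⟨p, q, ⟨hpr, hrq⟩, hpq⟩ := mem_nhds_iff_exists_Ioo_subset.1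
    ((hU.inter isOpen_Ioo).mem_nhds ⟨hrU, hrI⟩)
  have hxyp : Ioo p q ⊆ Ioo (f x) (f y) := hpq.trans inter_subset_right
  have hlt : p < q := hpr.trans hrq
  obtain ⟨hxp, hqy⟩ := (Ioo_subset_Ioo_iff hlt).1 hxyp
  have hxys : Icc x y ⊆ s := hs.out hx hy
  obtain ⟨α, hα, β, hβ, hαβ, hαp, hqβ, hmaps⟩ :=
    exists_mapsTo_Ioo_of_le_of_le hxy (hf.mono hxys) hlt hxp hqy
  have hαβs : Icc α β ⊆ s := (Icc_subset_Icc hα.1 hβ.2).trans hxys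
  have hderiv : ∀ t ∈ interior (Icc α β), ∃ d ≤ 0, HasDerivAt f d t := fun t ht =>
    hf' t (interior_mono hαβs ht) (hpq (hmaps (by rwa [interior_Icc] at ht))).1
  have hanti : AntitoneOn f (Icc α β) := by
    refine antitoneOn_of_deriv_nonpos (convex_Icc α β) (hf.mono hαβs) (fun t ht => ?_)
      fun t ht => ?_
    · obtain ⟨d, -, hd⟩ := hderiv t ht
      exact hd.differentiableAt.differentiableWithinAt
    · obtain ⟨d, hd0, hd⟩ := hderiv t ht
      rwa [hd.deriv]
  linarith [hanti (left_mem_Icc.2 hαβ.le) (right_mem_Icc.2 hαβ.le) hαβ.le]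

theorem antitoneOn_max_zero_of_hasDerivAt_nonpos {f : ℝ → ℝ} {s : Set ℝ} (hs : s.OrdConnected)
    (hf : ContinuousOn f s) (hf' : ∀ x ∈ interior s, 0 < f x → ∃ d ≤ 0, HasDerivAt f d x) :
    AntitoneOn (fun x => max (f x) 0) s := by
  refine antitoneOn_of_hasDerivAt_nonpos_of_dense hs (hf.sup continuousOn_const)
    isOpen_compl_singleton (dense_compl_singleton 0) fun x hx hne => ?_
  have hpos : 0 < f x := by
    by_contra! h
    exact hne (max_eq_right h)
  obtain ⟨d, hd0, hd⟩ := hf' x hx hpos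
  refine ⟨d, hd0, hd.congr_of_eventuallyEq ?_⟩
  filter_upwards [hd.continuousAt.eventually (lt_mem_nhds hpos)] with t ht using max_eq_left ht.le

theorem nonpos_of_tendsto_atBot_zero {f : ℝ → ℝ} {b : ℝ} (hf : ContinuousOn f (Iic b))
    (hlim : Tendsto f atBot (nhds 0))
    (hf' : ∀ x ∈ Iio b, 0 < f x → ∃ d ≤ 0, HasDerivAt f d x) {x : ℝ} (hx : x ≤ b) : f x ≤ 0 := by
  have hanti := antitoneOn_max_zero_of_hasDerivAt_nonpos ordConnected_Iic hf
    (by rwa [interior_Iic])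
  have hlim' : Tendsto (fun t => max (f t) 0) atBot (nhds 0) := by
    simpa only [max_self] using hlim.max (tendsto_const_nhds (x := (0 : ℝ)))
  refine (le_max_left _ 0).trans (ge_of_tendsto hlim' ?_)
  filter_upwards [eventually_le_atBot x] with t ht using hanti (ht.trans hx) hx ht

theorem eq_of_tendsto_atTop_of_hasDerivAt_zero {f : ℝ → ℝ} {a l : ℝ}
    (hf : ContinuousOn f (Ici a)) (hlim : Tendsto f atTop (nhds l))
    (hf' : ∀ x ∈ Ioi a, f x ≠ l → HasDerivAt f 0 x) : f a = l := by
  have hanti : AntitoneOn f (Ici a) :=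
    antitoneOn_of_hasDerivAt_nonpos_of_dense ordConnected_Ici hf isOpen_compl_singleton
      (dense_compl_singleton l) fun x hx hne => ⟨0, le_rfl, hf' x (interior_Ici (a := a) ▸ hx) hne⟩
  have hanti_neg : AntitoneOn (fun x => -f x) (Ici a) :=
    antitoneOn_of_hasDerivAt_nonpos_of_dense ordConnected_Ici hf.neg isOpen_compl_singleton
      (dense_compl_singleton (-l)) fun x hx hne =>
        ⟨-0, neg_zero.le, (hf' x (interior_Ici (a := a) ▸ hx) (neg_injective.ne_iff.1 hne)).neg⟩
  have hconst : f =ᶠ[atTop] fun _ => f a := by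
    filter_upwards [eventually_ge_atTop a] with x hx
    exact (hanti self_mem_Ici hx hx).antisymm (neg_le_neg_iff.1 (hanti_neg self_mem_Ici hx hx))
  exact tendsto_nhds_unique tendsto_const_nhds (hlim.congr' hconst)

theorem le_of_hasDerivAt_le_of_lt {f g : ℝ → ℝ} {a b : ℝ} (hf : ContinuousOn f (Icc a b))
    (hg : ContinuousOn g (Icc a b)) (ha : f a ≤ g a)
    (hd : ∀ x ∈ Ioo a b, g x < f x → ∃ f' g', HasDerivAt f f' x ∧ HasDerivAt g g' x ∧ f' ≤ g')
    {x : ℝ} (hx : x ∈ Icc a b) : f x ≤ g x := by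
  have hanti : AntitoneOn (fun t => max (f t - g t) 0) (Icc a b) := by
    refine antitoneOn_max_zero_of_hasDerivAt_nonpos ordConnected_Icc (hf.sub hg) fun t ht hpos => ?_
    rw [interior_Icc] at ht
    obtain ⟨f', g', hf', hg', hle⟩ := hd t ht (sub_pos.1 hpos)
    exact ⟨f' - g', sub_nonpos.2 hle, hf'.sub hg'⟩
  refine sub_nonpos.1 ?_
  calc f x - g x ≤ max (f x - g x) 0 := le_max_left _ _
    _ ≤ max (f a - g a) 0 := hanti (left_mem_Icc.2 (hx.1.trans hx.2)) hx hx.1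
    _ = 0 := max_eq_right (sub_nonpos.2 ha)

theorem le_of_hasDerivAt_ge_of_lt {f g : ℝ → ℝ} {a b : ℝ} (hf : ContinuousOn f (Icc a b))
    (hg : ContinuousOn g (Icc a b)) (hb : f b ≤ g b)
    (hd : ∀ x ∈ Ioo a b, g x < f x → ∃ f' g', HasDerivAt f f' x ∧ HasDerivAt g g' x ∧ g' ≤ f')
    {x : ℝ} (hx : x ∈ Icc a b) : f x ≤ g x := by
  have hmaps : MapsTo Neg.neg (Icc (-b) (-a)) (Icc a b) := fun t ht =>
    ⟨le_neg.1 ht.2, neg_le.1 ht.1⟩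
  have hneg : f (- -x) ≤ g (- -x) :=
    le_of_hasDerivAt_le_of_lt (f := fun t => f (-t)) (g := fun t => g (-t))
      (hf.comp continuousOn_neg hmaps) (hg.comp continuousOn_neg hmaps) (by simpa using hb)
      (fun t ht hlt => by
        obtain ⟨f', g', hf', hg', hle⟩ := hd (-t) ⟨lt_neg.1 ht.2, neg_lt.1 ht.1⟩ hlt
        refine ⟨-f', -g', ?_, ?_, neg_le_neg hle⟩
        · simpa [Function.comp_def] using hf'.scomp t (hasDerivAt_neg t)
        · simpa [Function.comp_def] using hg'.scomp t (hasDerivAt_neg t))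
      ⟨neg_le_neg hx.2, neg_le_neg hx.1⟩
  rwa [neg_neg] at hneg

/-! ### Terminal value problems with monotone right-hand side -/

theorem exists_terminal_value_of_lipschitz {F : ℝ → ℝ → ℝ} {a b : ℝ} {K L : NNReal} (hab : a ≤ b)
    (x₀ : ℝ) (hF : ∀ x, ContinuousOn (F · x) (Icc a b))
    (hK : ∀ t ∈ Icc a b, LipschitzWith K (F t)) (hL : ∀ t ∈ Icc a b, ∀ x, |F t x| ≤ L) :
    ∃ w : ℝ → ℝ, ContinuousOn w (Icc a b) ∧ w b = x₀ ∧
      ∀ t ∈ Ioo a b, HasDerivAt w (F t (w t)) t := by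
  have hPL : IsPicardLindelof F (⟨b, right_mem_Icc.2 hab⟩ : Icc a b) x₀ (L * (b - a).toNNReal) 0
      L K := by
    refine ⟨fun t ht => (hK t ht).lipschitzOnWith, fun x _ => hF x, fun t ht x _ => hL t ht x, ?_⟩
    rw [sub_self, max_eq_right (sub_nonneg.2 hab), NNReal.coe_mul,
      Real.coe_toNNReal _ (sub_nonneg.2 hab), NNReal.coe_zero, sub_zero]
  obtain ⟨w, hwb, hw⟩ := hPL.exists_eq_forall_mem_Icc_hasDerivWithinAt₀
  exact ⟨w, fun t ht => (hw t ht).continuousWithinAt, hwb,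
    fun t ht => (hw t (Ioo_subset_Icc_self ht)).hasDerivAt (Icc_mem_nhds ht.1 ht.2)⟩

/-- An `ε`-approximate solution on `[a, b]` of the terminal value problem `w' = F t w`, `w b = x₀`:
the differential equation holds up to an error `ε`. -/
structure IsApproxTerminalSol (F : ℝ → ℝ → ℝ) (a b x₀ ε : ℝ) (w : ℝ → ℝ) : Prop where
  cont : ContinuousOn w (Icc a b)
  terminal : w b = x₀
  eqn : ∀ t ∈ Ioo a b, ∃ d, HasDerivAt w d t ∧ |d - F t (w t)| ≤ ε

namespace IsApproxTerminalSol

variable {F : ℝ → ℝ → ℝ} {a b x₀ ε δ : ℝ} {w z : ℝ → ℝ}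

theorem sub_le (hF : ∀ t ∈ Ioo a b, Monotone (F t)) (hε : 0 ≤ ε) (hδ : 0 ≤ δ)
    (hw : IsApproxTerminalSol F a b x₀ ε w) (hz : IsApproxTerminalSol F a b x₀ δ z) {t : ℝ}
    (ht : t ∈ Icc a b) : w t - z t ≤ (ε + δ) * (b - t) := by
  have hle : w t ≤ z t + (ε + δ) * (b - t) := by
    refine le_of_hasDerivAt_ge_of_lt (g := fun t => z t + (ε + δ) * (b - t)) hw.cont
      (hz.cont.add (by fun_prop)) (by simp [hw.terminal, hz.terminal]) (fun s hs hlt => ?_) ht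
    obtain ⟨w', hw', hwF⟩ := hw.eqn s hs
    obtain ⟨z', hz', hzF⟩ := hz.eqn s hs
    refine ⟨w', _, hw', hz'.add (((hasDerivAt_id s).const_sub b).const_mul (ε + δ)), ?_⟩
    have hzw : z s ≤ w s := by nlinarith [hs.2]
    linarith [hF s hs hzw, (abs_le.1 hwF).1, (abs_le.1 hzF).2]
  linarith

theorem dist_le (hF : ∀ t ∈ Ioo a b, Monotone (F t)) (hε : 0 ≤ ε) (hδ : 0 ≤ δ)
    (hw : IsApproxTerminalSol F a b x₀ ε w) (hz : IsApproxTerminalSol F a b x₀ δ z) {t : ℝ}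
    (ht : t ∈ Icc a b) : dist (w t) (z t) ≤ (ε + δ) * (b - t) := by
  rw [Real.dist_eq, abs_le]
  constructor
  · linarith [hz.sub_le hF hδ hε hw ht]
  · exact hw.sub_le hF hε hδ hz ht

theorem exists_tendstoUniformlyOn {w : ℕ → ℝ → ℝ} {ε : ℕ → ℝ}
    (hF : ∀ t ∈ Ioo a b, Monotone (F t)) (hε0 : ∀ n, 0 ≤ ε n) (hε : Tendsto ε atTop (nhds 0))
    (hw : ∀ n, IsApproxTerminalSol F a b x₀ (ε n) (w n)) :
    ∃ W, TendstoUniformlyOn w W atTop (Icc a b) := by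
  have hcauchy : UniformCauchySeqOn w atTop (Icc a b) := by
    have hlim : Tendsto (fun n : ℕ × ℕ => (ε n.1 + ε n.2) * (b - a)) (atTop ×ˢ atTop)
        (nhds 0) := by
      simpa using ((hε.comp tendsto_fst).add (hε.comp tendsto_snd)).mul_const (b - a)
    intro V hV
    obtain ⟨η, hη, hηV⟩ := Metric.mem_uniformity_dist.1 hV
    filter_upwards [hlim.eventually (gt_mem_nhds hη)] with n hn t ht
    refine hηV (((hw n.1).dist_le hF (hε0 _) (hε0 _) (hw n.2) ht).trans_lt (lt_of_le_of_lt ?_ hn))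
    exact mul_le_mul_of_nonneg_left (by linarith [ht.1]) (add_nonneg (hε0 _) (hε0 _))
  have hlim : ∀ t, ∃ W, t ∈ Icc a b → Tendsto (fun n => w n t) atTop (nhds W) := fun t => by
    by_cases ht : t ∈ Icc a b
    · exact (cauchySeq_tendsto_of_complete (hcauchy.cauchy_map ht)).imp fun W hW _ => hW
    · exact ⟨0, fun h => absurd h ht⟩
  choose W hW using hlim
  exact ⟨W, hcauchy.tendstoUniformlyOn_of_tendsto hW⟩

end IsApproxTerminalSol

theorem eqOn_of_hasDerivAt_of_monotone {F : ℝ → ℝ → ℝ} {a b : ℝ} {w z : ℝ → ℝ}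
    (hF : ∀ t ∈ Ioo a b, Monotone (F t)) (hw : ContinuousOn w (Icc a b))
    (hz : ContinuousOn z (Icc a b)) (hb : w b = z b)
    (hw' : ∀ t ∈ Ioo a b, HasDerivAt w (F t (w t)) t)
    (hz' : ∀ t ∈ Ioo a b, HasDerivAt z (F t (z t)) t) : EqOn w z (Icc a b) := by
  have hwF : IsApproxTerminalSol F a b (z b) 0 w := ⟨hw, hb, fun t ht => ⟨_, hw' t ht, by simp⟩⟩
  have hzF : IsApproxTerminalSol F a b (z b) 0 z := ⟨hz, rfl, fun t ht => ⟨_, hz' t ht, by simp⟩⟩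
  intro t ht
  simpa using hwF.dist_le hF le_rfl le_rfl hzF ht

theorem tendstoLocallyUniformlyOn_comp_of_continuousOn {F : ℝ → ℝ → ℝ} {w : ℕ → ℝ → ℝ} {W : ℝ → ℝ}
    {s : Set ℝ} (hF : ContinuousOn F.uncurry (s ×ˢ univ)) (hW : ContinuousOn W s)
    (hw : TendstoLocallyUniformlyOn w W atTop s) :
    TendstoLocallyUniformlyOn (fun n t => F t (w n t)) (fun t => F t (W t)) atTop s := by
  rw [tendstoLocallyUniformlyOn_iff_forall_tendsto] at hw ⊢
  intro t ht
  have hsnd : Tendsto Prod.snd ((atTop : Filter ℕ) ×ˢ nhdsWithin t s) (nhdsWithin t s) :=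
    tendsto_snd
  have hWt : Tendsto (fun y : ℕ × ℝ => W y.2) (atTop ×ˢ nhdsWithin t s) (nhds (W t)) :=
    Tendsto.comp (hW t ht) hsnd
  have hFt : ∀ {x : ℕ × ℝ → ℝ}, Tendsto x (atTop ×ˢ nhdsWithin t s) (nhds (W t)) →
      Tendsto (fun y => F y.2 (x y)) (atTop ×ˢ nhdsWithin t s) (nhds (F t (W t))) := fun hx => by
    have hFt := hF (t, W t) ⟨ht, mem_univ _⟩
    rw [ContinuousWithinAt, nhdsWithin_prod_eq, nhdsWithin_univ] at hFt
    exact hFt.comp (hsnd.prodMk hx)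
  exact ((hFt hWt).prodMk_nhds (hFt (hWt.congr_uniformity (hw t ht)))).mono_right
    (nhds_le_uniformity _)

theorem exists_terminal_value_of_monotone {F : ℝ → ℝ → ℝ} {a b : ℝ} (hab : a ≤ b) (x₀ : ℝ)
    (hF : ContinuousOn F.uncurry (Ioo a b ×ˢ univ)) (hmono : ∀ t ∈ Ioo a b, Monotone (F t))
    (happrox : ∀ ε > 0, ∃ w, IsApproxTerminalSol F a b x₀ ε w) :
    ∃ w : ℝ → ℝ, ContinuousOn w (Icc a b) ∧ w b = x₀ ∧
      ∀ t ∈ Ioo a b, HasDerivAt w (F t (w t)) t := by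
  set ε : ℕ → ℝ := fun n => 1 / ((n : ℝ) + 1)
  have hε0 : ∀ n, 0 < ε n := fun n => by positivity
  have hε : Tendsto ε atTop (nhds 0) := tendsto_one_div_add_atTop_nhds_zero_nat
  choose w hw using fun n => happrox (ε n) (hε0 n)
  obtain ⟨W, hW⟩ := IsApproxTerminalSol.exists_tendstoUniformlyOn hmono (fun n => (hε0 n).le) hε hw
  have hWc : ContinuousOn W (Icc a b) := hW.continuousOn (Frequently.of_forall fun n => (hw n).cont)
  have hWb : W b = x₀ := tendsto_nhds_unique (hW.tendsto_at (right_mem_Icc.2 hab))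
    (by simpa only [(hw _).terminal] using tendsto_const_nhds)
  refine ⟨W, hWc, hWb, fun t ht => ?_⟩
  have hderiv : ∀ n, ∀ s ∈ Ioo a b, HasDerivAt (w n) (deriv (w n) s) s ∧
      dist (deriv (w n) s) (F s (w n s)) ≤ ε n := fun n s hs => by
    obtain ⟨d, hd, hdF⟩ := (hw n).eqn s hs
    exact hd.deriv.symm ▸ ⟨hd, hdF⟩
  refine hasDerivAt_of_tendstoLocallyUniformlyOn (l := atTop) (f' := fun n s => deriv (w n) s)
    (g' := fun s => F s (W s)) isOpen_Ioo ?_ (.of_forall fun n s hs => (hderiv n s hs).1)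
    (fun s hs => hW.tendsto_at (Ioo_subset_Icc_self hs)) ht
  have hFW := tendstoLocallyUniformlyOn_comp_of_continuousOn hF (hWc.mono Ioo_subset_Icc_self)
    (hW.mono Ioo_subset_Icc_self).tendstoLocallyUniformlyOn
  rw [Metric.tendstoLocallyUniformlyOn_iff] at hFW ⊢
  intro η hη s hs
  obtain ⟨v, hv, hvF⟩ := hFW (η / 2) (half_pos hη) s hs
  refine ⟨v ∩ Ioo a b, inter_mem hv self_mem_nhdsWithin, ?_⟩
  filter_upwards [hvF, hε.eventually (gt_mem_nhds (half_pos hη))] with n hnF hnε r hr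
  linarith [hnF r hr.1, (hderiv n r hr.2).2,
    dist_triangle_right (F r (W r)) (deriv (w n) r) (F r (w n r))]

theorem exists_terminal_value_sub_of_lipschitz {k φ f G : ℝ → ℝ} {a b C : ℝ} {K : NNReal}
    (hab : a ≤ b) (hk : ContinuousOn k (Icc a b)) (hG : ContinuousOn G (Icc a b))
    (hGf : ∀ t ∈ Ioo a b, HasDerivAt G (f t) t) (hφ : LipschitzWith K φ) (hC : ∀ x, |φ x| ≤ C)
    (x₀ : ℝ) :
    ∃ w : ℝ → ℝ, ContinuousOn w (Icc a b) ∧ w b = x₀ ∧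
      ∀ t ∈ Ioo a b, HasDerivAt w (k t * φ (w t) - f t) t := by
  obtain ⟨A, hA⟩ := isCompact_Icc.exists_bound_of_continuousOn hk
  lift A to NNReal using (norm_nonneg _).trans (hA a (left_mem_Icc.2 hab))
  lift C to NNReal using (abs_nonneg _).trans (hC 0)
  have hK : ∀ t ∈ Icc a b, LipschitzWith (A * K) fun x => k t * φ (x - G t) := fun t ht =>
    .of_dist_le_mul fun x y => by
      have hxy := hφ.dist_le_mul (x - G t) (y - G t)
      rw [dist_sub_right] at hxy
      rw [Real.dist_eq, ← mul_sub, abs_mul, ← Real.dist_eq, NNReal.coe_mul, mul_assoc]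
      exact mul_le_mul (hA t ht) hxy dist_nonneg A.2
  have hL : ∀ t ∈ Icc a b, ∀ x, |k t * φ (x - G t)| ≤ (A * C : NNReal) := fun t ht x => by
    rw [abs_mul, NNReal.coe_mul]
    exact mul_le_mul (hA t ht) (hC _) (abs_nonneg _) A.2
  obtain ⟨w, hw, hwb, hw'⟩ := exists_terminal_value_of_lipschitz hab (x₀ + G b)
    (fun x => hk.mul (hφ.continuous.comp_continuousOn (continuousOn_const.sub hG))) hK hL
  exact ⟨fun t => w t - G t, hw.sub hG, by simp [hwb], fun t ht => (hw' t ht).sub (hGf t ht)⟩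

theorem exists_lipschitzWith_rpow_max_min {ε : ℝ} (hε : 0 < ε) (M r : ℝ) :
    ∃ K, LipschitzWith K fun x : ℝ => (max ε (min x M)) ^ r := by
  have hrpow : ContDiffOn ℝ 1 (fun x : ℝ => x ^ r) (Icc ε (max ε M)) := fun x hx =>
    (Real.contDiffAt_rpow_const_of_ne (hε.trans_le hx.1).ne').contDiffWithinAt
  obtain ⟨K, hK⟩ := hrpow.exists_lipschitzOnWith one_ne_zero (convex_Icc _ _) isCompact_Icc
  have hclamp : LipschitzWith 1 fun x : ℝ => max ε (min x M) :=
    (LipschitzWith.id.min_const M).const_max ε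
  refine ⟨K * 1, lipschitzOnWith_univ.1 (hK.comp hclamp.lipschitzOnWith fun x _ => ?_)⟩
  exact ⟨le_max_left _ _, max_le_max_left ε (min_le_right x M)⟩

theorem abs_rpow_max_sub_rpow_max_zero_le {ε r : ℝ} (hε : 0 ≤ ε) (hr : 0 ≤ r) (x : ℝ) :
    |(max ε x) ^ r - (max 0 x) ^ r| ≤ ε ^ r := by
  have hle : (max 0 x) ^ r ≤ (max ε x) ^ r :=
    Real.rpow_le_rpow (le_max_left _ _) (max_le_max_right x hε) hr
  rw [abs_of_nonneg (sub_nonneg.2 hle)]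
  rcases le_total ε x with h | h
  · rw [max_eq_right h, max_eq_right (hε.trans h), sub_self]
    positivity
  · rw [max_eq_left h]
    linarith [Real.rpow_nonneg (le_max_left 0 x) r]

theorem monotone_max_zero_rpow {r : ℝ} (hr : 0 ≤ r) : Monotone fun x : ℝ => (max x 0) ^ r :=
  fun _ _ hxy => Real.rpow_le_rpow (le_max_right _ _) (max_le_max_right 0 hxy) hr

/-- An integrable reaction term `f = D ^ (p' - 1) g` on `(0, 1)`, possibly unbounded near the
endpoints. -/
structure IsSource (f : ℝ → ℝ) : Prop where
  cont : ContinuousOn f (Ioo 0 1)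
  integrable : IntegrableOn f (Ioo 0 1)
  nonneg : ∀ v ∈ Ioo (0 : ℝ) 1, 0 ≤ f v

namespace IsSource

variable {f : ℝ → ℝ} (hf : IsSource f)
include hf

theorem integrableOn_Icc : IntegrableOn f (Icc 0 1) :=
  (integrableOn_Icc_iff_integrableOn_Ioo).2 hf.integrable

theorem intervalIntegrable {a b : ℝ} (ha : a ∈ Icc (0 : ℝ) 1) (hb : b ∈ Icc (0 : ℝ) 1) :
    IntervalIntegrable f volume a b :=
  (hf.integrableOn_Icc.mono_set (uIcc_subset_Icc ha hb)).intervalIntegrable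

theorem continuousOn_integral : ContinuousOn (fun v => ∫ x in (0 : ℝ)..v, f x) (Icc 0 1) := by
  have hint := hf.integrableOn_Icc
  rw [← uIcc_of_le zero_le_one] at hint ⊢
  exact intervalIntegral.continuousOn_primitive_interval hint

theorem hasDerivAt_integral {v : ℝ} (hv : v ∈ Ioo (0 : ℝ) 1) :
    HasDerivAt (fun v => ∫ x in (0 : ℝ)..v, f x) (f v) v :=
  intervalIntegral.integral_hasDerivAt_right
    (hf.intervalIntegrable (left_mem_Icc.2 zero_le_one) (Ioo_subset_Icc_self hv))
    (hf.cont.stronglyMeasurableAtFilter isOpen_Ioo v hv)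
    (hf.cont.continuousAt (isOpen_Ioo.mem_nhds hv))

theorem integral_nonneg {v : ℝ} (hv : v ∈ Icc (0 : ℝ) 1) : 0 ≤ ∫ x in (0 : ℝ)..v, f x := by
  rw [intervalIntegral.integral_of_le hv.1, integral_Ioc_eq_integral_Ioo]
  exact setIntegral_nonneg measurableSet_Ioo fun x hx => hf.nonneg x ⟨hx.1, hx.2.trans_le hv.2⟩

end IsSource

/-! ### The backward first-order problem -/

-- `x ^ r` is not Lipschitz at `0`; clamping it below at `δ` costs `δ ^ r` in the equation.
theorem exists_isApproxTerminalSol_truncated_rpow {k f G : ℝ → ℝ} {a b r : ℝ} (hab : a ≤ b)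
    (hr : 0 < r) (hk : ContinuousOn k (Icc a b)) (hG : ContinuousOn G (Icc a b))
    (hGf : ∀ t ∈ Ioo a b, HasDerivAt G (f t) t) (M x₀ : ℝ) {ε : ℝ} (hε : 0 < ε) :
    ∃ w, IsApproxTerminalSol (fun t x => k t * (max 0 (min x M)) ^ r - f t) a b x₀ ε w := by
  obtain ⟨A, hA⟩ := isCompact_Icc.exists_bound_of_continuousOn hk
  have hA0 : 0 ≤ A := (norm_nonneg _).trans (hA a (left_mem_Icc.2 hab))
  set δ := (ε / (A + 1)) ^ r⁻¹
  have hδ : 0 < δ := by positivity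
  have hδr : δ ^ r = ε / (A + 1) := Real.rpow_inv_rpow (by positivity) hr.ne'
  obtain ⟨K, hK⟩ := exists_lipschitzWith_rpow_max_min hδ M r
  have hbound : ∀ x, |(max δ (min x M)) ^ r| ≤ (max δ M) ^ r := fun x => by
    rw [abs_of_nonneg (by positivity)]
    exact Real.rpow_le_rpow (by positivity) (max_le_max_left δ (min_le_right x M)) hr.le
  obtain ⟨w, hw, hwb, hw'⟩ := exists_terminal_value_sub_of_lipschitz hab hk hG hGf hK hbound x₀
  refine ⟨w, hw, hwb, fun t ht => ⟨_, hw' t ht, ?_⟩⟩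
  rw [sub_sub_sub_cancel_right, ← mul_sub, abs_mul]
  calc |k t| * |(max δ (min (w t) M)) ^ r - (max 0 (min (w t) M)) ^ r|
      ≤ (A + 1) * δ ^ r :=
        mul_le_mul ((hA t (Ioo_subset_Icc_self ht)).trans (by linarith))
          (abs_rpow_max_sub_rpow_max_zero_le hδ.le hr.le _) (abs_nonneg _) (by linarith)
    _ = ε := by rw [hδr]; field_simp

theorem exists_terminal_value_truncated_rpow {k f G : ℝ → ℝ} {a b r : ℝ} (hab : a ≤ b) (hr : 0 < r)
    (hk : ContinuousOn k (Icc a b)) (hk0 : ∀ t ∈ Ioo a b, 0 ≤ k t) (hf : ContinuousOn f (Ioo a b))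
    (hG : ContinuousOn G (Icc a b)) (hGf : ∀ t ∈ Ioo a b, HasDerivAt G (f t) t) (M x₀ : ℝ) :
    ∃ w : ℝ → ℝ, ContinuousOn w (Icc a b) ∧ w b = x₀ ∧
      ∀ t ∈ Ioo a b, HasDerivAt w (k t * (max 0 (min (w t) M)) ^ r - f t) t := by
  have hpow : Monotone fun x : ℝ => (max 0 (min x M)) ^ r := fun x y hxy =>
    Real.rpow_le_rpow (le_max_left _ _) (max_le_max_left 0 (min_le_min_right M hxy)) hr.le
  refine exists_terminal_value_of_monotone
    (F := fun t x => k t * (max 0 (min x M)) ^ r - f t) hab x₀ ?_ (fun t ht x y hxy => ?_)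
    fun ε hε => exists_isApproxTerminalSol_truncated_rpow hab hr hk hG hGf M x₀ hε
  · have hfst : MapsTo Prod.fst (Ioo a b ×ˢ (univ : Set ℝ)) (Ioo a b) := fun _ h => h.1
    have hpowc : Continuous fun y : ℝ × ℝ => (max 0 (min y.2 M)) ^ r :=
      (by fun_prop : Continuous fun y : ℝ × ℝ => max 0 (min y.2 M)).rpow_const
        fun _ => Or.inr hr.le
    exact (((hk.mono Ioo_subset_Icc_self).comp continuousOn_fst hfst).mul hpowc.continuousOn).sub
      (hf.comp continuousOn_fst hfst)
  · exact sub_le_sub_right (mul_le_mul_of_nonneg_left (hpow hxy) (hk0 t ht)) _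

theorem IsSource.le_mul_integral {f y : ℝ → ℝ} {q : ℝ} (hf : IsSource f) (hq : 0 ≤ q)
    (hy : ContinuousOn y (Icc 0 1)) (hy1 : y 1 = 0)
    (hy' : ∀ v ∈ Ioo (0 : ℝ) 1, ∃ d, HasDerivAt y d v ∧ -(q * f v) ≤ d) {v : ℝ}
    (hv : v ∈ Icc (0 : ℝ) 1) : y v ≤ q * ∫ x in (0 : ℝ)..1, f x := by
  have hle : y v ≤ q * (∫ x in (0 : ℝ)..1, f x) - q * ∫ x in (0 : ℝ)..v, f x := by
    refine le_of_hasDerivAt_ge_of_lt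
      (g := fun v => q * (∫ x in (0 : ℝ)..1, f x) - q * ∫ x in (0 : ℝ)..v, f x) hy
      (continuousOn_const.sub (continuousOn_const.mul hf.continuousOn_integral)) (by simp [hy1])
      (fun t ht _ => ?_) hv
    obtain ⟨d, hd, hle⟩ := hy' t ht
    exact ⟨d, _, hd, ((hf.hasDerivAt_integral ht).const_mul q).const_sub _, hle⟩
  linarith [mul_nonneg hq (hf.integral_nonneg hv)]

/-- A solution of the terminal value problem `y' = q (k y₊ ^ (1 / p) - f)`, `y 1 = 0` on `[0, 1]`.
For `k = c + h`, `q = p'` and `f = D ^ (p' - 1) g` this is the first-order problem with speed `c`,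
without the condition at `0`. -/
structure IsBackwardSol (p q : ℝ) (k f y : ℝ → ℝ) : Prop where
  cont : ContinuousOn y (Icc 0 1)
  eqn : ∀ v ∈ Ioo (0 : ℝ) 1, HasDerivAt y (q * (k v * (max (y v) 0) ^ (1 / p) - f v)) v
  terminal : y 1 = 0

section BackwardSol

variable {p q C : ℝ} {k l f y z : ℝ → ℝ} (hpq : p.HolderConjugate q)
include hpq

theorem exists_isBackwardSol (hk : ContinuousOn k (Icc 0 1)) (hk0 : ∀ v ∈ Icc (0 : ℝ) 1, 0 ≤ k v)
    (hf : IsSource f) : ∃ y, IsBackwardSol p q k f y := by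
  have hq : 0 ≤ q := hpq.symm.nonneg
  set M := q * ∫ x in (0 : ℝ)..1, f x
  obtain ⟨y, hy, hy1, hy'⟩ := exists_terminal_value_truncated_rpow (k := fun v => q * k v)
    (f := fun v => q * f v) (zero_le_one' ℝ) hpq.one_div_pos (continuousOn_const.mul hk)
    (fun v hv => mul_nonneg hq (hk0 v (Ioo_subset_Icc_self hv))) (continuousOn_const.mul hf.cont)
    (continuousOn_const.mul hf.continuousOn_integral)
    (fun v hv => (hf.hasDerivAt_integral hv).const_mul q) M 0
  have hyM : ∀ v ∈ Icc (0 : ℝ) 1, y v ≤ M := fun v hv =>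
    hf.le_mul_integral hq hy hy1 (fun v hv => ⟨_, hy' v hv, neg_le_sub_iff_le_add.2 <|
      le_add_of_nonneg_left <| mul_nonneg (mul_nonneg hq (hk0 v (Ioo_subset_Icc_self hv)))
        (Real.rpow_nonneg (le_max_left _ _) _)⟩) hv
  refine ⟨y, hy, fun v hv => (hy' v hv).congr_deriv ?_, hy1⟩
  rw [min_eq_left (hyM v (Ioo_subset_Icc_self hv)), max_comm]
  ring

namespace IsBackwardSol

theorem nonneg (hf : IsSource f) (hy : IsBackwardSol p q k f y) {v : ℝ} (hv : v ∈ Icc (0 : ℝ) 1) :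
    0 ≤ y v := by
  refine neg_nonpos.1 (le_of_hasDerivAt_ge_of_lt (f := fun v => -y v) (g := fun _ => 0) hy.cont.neg
    continuousOn_const (by simp [hy.terminal]) (fun t ht hyt => ?_) hv)
  refine ⟨_, 0, (hy.eqn t ht).neg, hasDerivAt_const t 0, ?_⟩
  rw [max_eq_right (neg_pos.1 hyt).le, Real.zero_rpow hpq.one_div_pos.ne']
  linarith [mul_nonneg hpq.symm.nonneg (hf.nonneg t ht)]

theorem le_mul_integral (hk : ∀ v ∈ Icc (0 : ℝ) 1, 0 ≤ k v) (hf : IsSource f)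
    (hy : IsBackwardSol p q k f y) {v : ℝ} (hv : v ∈ Icc (0 : ℝ) 1) :
    y v ≤ q * ∫ x in (0 : ℝ)..1, f x := by
  refine hf.le_mul_integral hpq.symm.nonneg hy.cont hy.terminal
    (fun t ht => ⟨_, hy.eqn t ht, ?_⟩) hv
  have hky : 0 ≤ k t * max (y t) 0 ^ (1 / p) :=
    mul_nonneg (hk t (Ioo_subset_Icc_self ht)) (Real.rpow_nonneg (le_max_right _ _) _)
  rw [← mul_neg]
  exact mul_le_mul_of_nonneg_left (by linarith) hpq.symm.nonneg

theorem anti (hk : ∀ v ∈ Icc (0 : ℝ) 1, 0 ≤ k v) (hkl : ∀ v ∈ Icc (0 : ℝ) 1, k v ≤ l v)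
    (hy : IsBackwardSol p q k f y) (hz : IsBackwardSol p q l f z) {v : ℝ}
    (hv : v ∈ Icc (0 : ℝ) 1) : z v ≤ y v := by
  refine le_of_hasDerivAt_ge_of_lt hz.cont hy.cont (by rw [hz.terminal, hy.terminal])
    (fun t ht hyz => ⟨_, _, hz.eqn t ht, hy.eqn t ht, ?_⟩) hv
  have htI := Ioo_subset_Icc_self ht
  refine mul_le_mul_of_nonneg_left (sub_le_sub_right ?_ _) hpq.symm.nonneg
  exact mul_le_mul (hkl t htI) (monotone_max_zero_rpow hpq.one_div_nonneg hyz.le)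
    (Real.rpow_nonneg (le_max_right _ _) _) ((hk t htI).trans (hkl t htI))

theorem le_add (hk : ∀ v ∈ Icc (0 : ℝ) 1, 0 ≤ k v) (hl : ∀ v ∈ Icc (0 : ℝ) 1, 0 ≤ l v)
    (hf : IsSource f) (hC : 0 ≤ C) (hlk : ∀ v ∈ Icc (0 : ℝ) 1, l v ≤ k v + C)
    (hy : IsBackwardSol p q k f y) (hz : IsBackwardSol p q l f z) {v : ℝ}
    (hv : v ∈ Icc (0 : ℝ) 1) : y v ≤ z v + q * (q * ∫ x in (0 : ℝ)..1, f x) ^ (1 / p) * C := by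
  set P := (q * ∫ x in (0 : ℝ)..1, f x) ^ (1 / p)
  have hq := hpq.symm.nonneg
  have hI : 0 ≤ q * ∫ x in (0 : ℝ)..1, f x :=
    mul_nonneg hq (hf.integral_nonneg (right_mem_Icc.2 zero_le_one))
  have hqPC : 0 ≤ q * P * C := mul_nonneg (mul_nonneg hq (Real.rpow_nonneg hI _)) hC
  have hle : y v ≤ z v + q * P * C * (1 - v) := by
    refine le_of_hasDerivAt_ge_of_lt (g := fun v => z v + q * P * C * (1 - v)) hy.cont
      (hz.cont.add (by fun_prop)) (by simp [hy.terminal, hz.terminal]) (fun t ht hlt => ?_) hv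
    refine ⟨_, _, hy.eqn t ht, (hz.eqn t ht).add
      (((hasDerivAt_id t).const_sub 1).const_mul (q * P * C)), ?_⟩
    have htI := Ioo_subset_Icc_self ht
    have hzy : z t ≤ y t := by nlinarith [mul_nonneg hqPC (sub_nonneg.2 htI.2)]
    have hzP : max (z t) 0 ^ (1 / p) ≤ P := Real.rpow_le_rpow (le_max_right _ _)
      (max_le (hz.le_mul_integral hpq hl hf htI) hI) hpq.one_div_nonneg
    have hlz : l t * max (z t) 0 ^ (1 / p) ≤ k t * max (y t) 0 ^ (1 / p) + P * C := by
      calc l t * max (z t) 0 ^ (1 / p) ≤ (k t + C) * max (z t) 0 ^ (1 / p) :=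
            mul_le_mul_of_nonneg_right (hlk t htI) (Real.rpow_nonneg (le_max_right _ _) _)
        _ = k t * max (z t) 0 ^ (1 / p) + max (z t) 0 ^ (1 / p) * C := by ring
        _ ≤ k t * max (y t) 0 ^ (1 / p) + P * C :=
            add_le_add (mul_le_mul_of_nonneg_left
              (monotone_max_zero_rpow hpq.one_div_nonneg hzy) (hk t htI))
              (mul_le_mul_of_nonneg_right hzP hC)
    linarith [mul_le_mul_of_nonneg_left hlz hq]
  linarith [mul_nonneg hqPC hv.1]

end IsBackwardSol

end BackwardSol

/-- A drift `k ≥ 0` on `[0, 1]` together with its primitive `K` vanishing at `0`. For waves of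
speed `c`, `k = c + h` and `K v = c v + H v`. -/
structure IsDrift (k K : ℝ → ℝ) : Prop where
  cont : ContinuousOn k (Icc 0 1)
  nonneg : ∀ v ∈ Icc (0 : ℝ) 1, 0 ≤ k v
  primitive_cont : ContinuousOn K (Icc 0 1)
  hasDerivAt : ∀ v ∈ Ioo (0 : ℝ) 1, HasDerivAt K (k v) v
  primitive_zero : K 0 = 0

namespace IsDrift

variable {k K : ℝ → ℝ} (hK : IsDrift k K)
include hK

theorem primitive_nonneg {v : ℝ} (hv : v ∈ Icc (0 : ℝ) 1) : 0 ≤ K v := by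
  have hmono : MonotoneOn K (Icc 0 1) := by
    refine monotoneOn_of_deriv_nonneg (convex_Icc 0 1) hK.primitive_cont ?_ ?_ <;>
      rw [interior_Icc] <;> intro t ht
    · exact (hK.hasDerivAt t ht).differentiableAt.differentiableWithinAt
    · exact (hK.hasDerivAt t ht).deriv ▸ hK.nonneg t (Ioo_subset_Icc_self ht)
  exact hK.primitive_zero ▸ hmono (left_mem_Icc.2 zero_le_one) hv hv.1

theorem primitive_pos (hpos : ∀ v ∈ Icc (0 : ℝ) 1, 0 < k v) {v : ℝ} (hv : v ∈ Ioc (0 : ℝ) 1) :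
    0 < K v := by
  have hmono : StrictMonoOn K (Icc 0 1) := by
    refine strictMonoOn_of_deriv_pos (convex_Icc 0 1) hK.primitive_cont fun t ht => ?_
    rw [interior_Icc] at ht
    exact (hK.hasDerivAt t ht).deriv ▸ hpos t (Ioo_subset_Icc_self ht)
  exact hK.primitive_zero ▸ hmono (left_mem_Icc.2 zero_le_one) ⟨hv.1.le, hv.2⟩ hv.1

theorem const_add {c : ℝ} (hc : 0 ≤ c) : IsDrift (fun v => c + k v) fun v => c * v + K v where
  cont := continuousOn_const.add hK.cont
  nonneg v hv := add_nonneg hc (hK.nonneg v hv)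
  primitive_cont := (continuousOn_const.mul continuousOn_id).add hK.primitive_cont
  hasDerivAt v hv :=
    (((hasDerivAt_id v).const_mul c).add (hK.hasDerivAt v hv)).congr_deriv (by rw [mul_one])
  primitive_zero := by simp [hK.primitive_zero]

theorem hasDerivAt_rpow {q : ℝ} (hq : 1 ≤ q) {v : ℝ} (hv : v ∈ Ioo (0 : ℝ) 1) :
    HasDerivAt (fun v => K v ^ q) (q * (k v * K v ^ (q - 1))) v :=
  ((hK.hasDerivAt v hv).rpow_const (p := q) (Or.inr hq)).congr_deriv (by ring)

end IsDrift

/-- A source with ignition threshold `θ`: it vanishes up to `θ` and is positive beyond. -/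
structure IsCombustionSource (θ : ℝ) (f : ℝ → ℝ) : Prop extends IsSource f where
  threshold_mem : θ ∈ Ioo (0 : ℝ) 1
  zero : ∀ v ∈ Ioc 0 θ, f v = 0
  pos : ∀ v ∈ Ioo θ 1, 0 < f v

namespace IsCombustionSource

variable {θ : ℝ} {f : ℝ → ℝ} (hf : IsCombustionSource θ f)
include hf

theorem integral_threshold : ∫ x in (0 : ℝ)..θ, f x = 0 := by
  rw [intervalIntegral.integral_of_le hf.threshold_mem.1.le]
  exact setIntegral_eq_zero_of_forall_eq_zero hf.zero

theorem integral_pos : 0 < ∫ x in (0 : ℝ)..1, f x := by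
  have hθ := Ioo_subset_Icc_self hf.threshold_mem
  have hint := hf.intervalIntegrable hθ (right_mem_Icc.2 zero_le_one)
  rw [← intervalIntegral.integral_add_adjacent_intervals
    (hf.intervalIntegrable (left_mem_Icc.2 zero_le_one) hθ) hint, hf.integral_threshold, zero_add]
  exact intervalIntegral.intervalIntegral_pos_of_pos_on hint hf.pos hf.threshold_mem.2

end IsCombustionSource

section Speed

variable {p q θ : ℝ} {k f y K : ℝ → ℝ} (hpq : p.HolderConjugate q)
include hpq

theorem rpow_rpow_one_div_eq {x : ℝ} (hx : 0 ≤ x) : (x ^ q) ^ (1 / p) = x ^ (q - 1) := by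
  rw [← Real.rpow_mul hx, mul_one_div, hpq.symm.div_conj_eq_sub_one]

namespace IsBackwardSol

theorem pos (hf : IsCombustionSource θ f) (hy : IsBackwardSol p q k f y) {v : ℝ}
    (hv : v ∈ Ioo θ 1) : 0 < y v := by
  have hv' : v ∈ Ioo (0 : ℝ) 1 := ⟨hf.threshold_mem.1.trans hv.1, hv.2⟩
  refine (hy.nonneg hpq hf.toIsSource (Ioo_subset_Icc_self hv')).lt_of_ne fun hyv => ?_
  have hmin : IsLocalMin y v := by
    filter_upwards [Ioo_mem_nhds hv'.1 hv'.2] with t ht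
    rw [← hyv]
    exact hy.nonneg hpq hf.toIsSource (Ioo_subset_Icc_self ht)
  have hfv : q * (k v * max (y v) 0 ^ (1 / p) - f v) = 0 := hmin.hasDerivAt_eq_zero (hy.eqn v hv')
  rw [← hyv, max_self, Real.zero_rpow hpq.one_div_pos.ne', mul_zero, zero_sub] at hfv
  nlinarith [hf.pos v hv, hpq.symm.pos]

theorem eqOn_rpow (hf : IsCombustionSource θ f) (hK : IsDrift k K) (hy : IsBackwardSol p q k f y)
    (hyθ : y θ = K θ ^ q) : EqOn y (fun v => K v ^ q) (Icc 0 θ) := by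
  have hsub : Icc 0 θ ⊆ Icc 0 1 := Icc_subset_Icc_right hf.threshold_mem.2.le
  have hsub' : ∀ t ∈ Ioo 0 θ, t ∈ Ioo (0 : ℝ) 1 := fun t ht => ⟨ht.1, ht.2.trans hf.threshold_mem.2⟩
  refine eqOn_of_hasDerivAt_of_monotone (F := fun v x => q * (k v * max x 0 ^ (1 / p)))
    (fun t ht x z hxz => ?_) (hy.cont.mono hsub)
    ((hK.primitive_cont.mono hsub).rpow_const fun _ _ => Or.inr hpq.symm.nonneg) hyθ
    (fun t ht => ?_) fun t ht => ?_
  · exact mul_le_mul_of_nonneg_left (mul_le_mul_of_nonneg_left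
      (monotone_max_zero_rpow hpq.one_div_nonneg hxz)
      (hK.nonneg t (Ioo_subset_Icc_self (hsub' t ht)))) hpq.symm.nonneg
  · simpa only [hf.zero t ⟨ht.1, ht.2.le⟩, sub_zero] using hy.eqn t (hsub' t ht)
  · have hKt := hK.primitive_nonneg (Ioo_subset_Icc_self (hsub' t ht))
    rw [max_eq_left (Real.rpow_nonneg hKt q), rpow_rpow_one_div_eq hpq hKt]
    exact hK.hasDerivAt_rpow hpq.symm.lt.le (hsub' t ht)

theorem hasDerivAt_rpow_one_div (hy : IsBackwardSol p q k f y) {v : ℝ} (hv : v ∈ Ioo (0 : ℝ) 1)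
    (hyv : 0 < y v) :
    HasDerivAt (fun v => y v ^ (1 / q)) (k v - f v / y v ^ (1 / p)) v := by
  refine ((hy.eqn v hv).rpow_const (p := 1 / q) (Or.inl hyv.ne')).congr_deriv ?_
  have hyp : y v ^ (1 / q - 1) = (y v ^ (1 / p))⁻¹ := by
    rw [← Real.rpow_neg hyv.le, one_div, one_div, hpq.symm.inv_sub_one]
  have hyp0 : y v ^ (1 / p) ≠ 0 := (Real.rpow_pos_of_pos hyv _).ne'
  have hq0 := hpq.symm.ne_zero
  rw [max_eq_left hyv.le, hyp]
  field_simp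

theorem rpow_one_div_le (hf : IsCombustionSource θ f) (hK : IsDrift k K)
    (hy : IsBackwardSol p q k f y) (hyθ : y θ ≤ K θ ^ q) {v : ℝ} (hv : v ∈ Icc θ 1) :
    y v ^ (1 / q) ≤ K v := by
  have hsub : Icc θ 1 ⊆ Icc 0 1 := Icc_subset_Icc_left hf.threshold_mem.1.le
  have hθ : θ ∈ Icc (0 : ℝ) 1 := Ioo_subset_Icc_self hf.threshold_mem
  refine le_of_hasDerivAt_le_of_lt (f := fun v => y v ^ (1 / q)) (g := K)
    ((hy.cont.mono hsub).rpow_const fun _ _ => Or.inr hpq.symm.one_div_nonneg)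
    (hK.primitive_cont.mono hsub) ?_ (fun t ht _ => ?_) hv
  · rw [one_div, Real.rpow_inv_le_iff_of_pos (hy.nonneg hpq hf.toIsSource hθ)
      (hK.primitive_nonneg hθ) hpq.symm.pos]
    exact hyθ
  · have ht' : t ∈ Ioo (0 : ℝ) 1 := ⟨hf.threshold_mem.1.trans ht.1, ht.2⟩
    have hyt := hy.pos hpq hf ht
    refine ⟨_, _, hy.hasDerivAt_rpow_one_div hpq ht' hyt, hK.hasDerivAt t ht', ?_⟩
    exact sub_le_self _ (div_nonneg (hf.nonneg t ht') (Real.rpow_nonneg hyt.le _))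

theorem mul_integral_le_rpow (hf : IsCombustionSource θ f) (hK : IsDrift k K)
    (hy : IsBackwardSol p q k f y) (hyθ : y θ ≤ K θ ^ q) :
    q * ∫ x in (0 : ℝ)..1, f x ≤ K 1 ^ q := by
  have hsub : Icc θ 1 ⊆ Icc 0 1 := Icc_subset_Icc_left hf.threshold_mem.1.le
  have hle := le_of_hasDerivAt_le_of_lt (a := θ) (b := 1)
    (f := fun v => y v + q * ∫ x in (0 : ℝ)..v, f x) (g := fun v => K v ^ q)
    ((hy.cont.add (continuousOn_const.mul hf.continuousOn_integral)).mono hsub)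
    ((hK.primitive_cont.mono hsub).rpow_const fun _ _ => Or.inr hpq.symm.nonneg)
    (by simpa [hf.integral_threshold] using hyθ) (fun t ht _ => ?_)
    (right_mem_Icc.2 hf.threshold_mem.2.le)
  · simpa [hy.terminal] using hle
  · have ht' : t ∈ Ioo (0 : ℝ) 1 := ⟨hf.threshold_mem.1.trans ht.1, ht.2⟩
    have hyt := hy.pos hpq hf ht
    refine ⟨_, _, (hy.eqn t ht').add ((hf.hasDerivAt_integral ht').const_mul q),
      hK.hasDerivAt_rpow hpq.symm.lt.le ht', ?_⟩
    have hyK : y t ^ (1 / p) ≤ K t ^ (q - 1) := by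
      calc y t ^ (1 / p) = (y t ^ (1 / q)) ^ (q - 1) := by
            rw [← rpow_rpow_one_div_eq hpq (Real.rpow_nonneg hyt.le _), one_div q,
              Real.rpow_inv_rpow hyt.le hpq.symm.ne_zero]
        _ ≤ K t ^ (q - 1) := Real.rpow_le_rpow (Real.rpow_nonneg hyt.le _)
            (hy.rpow_one_div_le hpq hf hK hyθ (Ioo_subset_Icc_self ht)) hpq.symm.sub_one_pos.le
    have hkyK := mul_le_mul_of_nonneg_left hyK (hK.nonneg t (Ioo_subset_Icc_self ht'))
    rw [max_eq_left hyt.le]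
    linarith [mul_le_mul_of_nonneg_left hkyK hpq.symm.nonneg]

end IsBackwardSol

theorem continuousOn_isBackwardSol_apply {Y : ℝ → ℝ → ℝ} (hf : IsSource f)
    (hk : ∀ v ∈ Icc (0 : ℝ) 1, 0 ≤ k v)
    (hY : ∀ c ≥ 0, IsBackwardSol p q (fun v => c + k v) f (Y c)) {v : ℝ} (hv : v ∈ Icc (0 : ℝ) 1) :
    ContinuousOn (fun c => Y c v) (Ici 0) := by
  set P := (q * ∫ x in (0 : ℝ)..1, f x) ^ (1 / p)
  have hP : 0 ≤ q * P := mul_nonneg hpq.symm.nonneg <| Real.rpow_nonneg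
    (mul_nonneg hpq.symm.nonneg (hf.integral_nonneg (right_mem_Icc.2 zero_le_one))) _
  have hck : ∀ c ≥ 0, ∀ v ∈ Icc (0 : ℝ) 1, 0 ≤ c + k v := fun c hc v hv => add_nonneg hc (hk v hv)
  refine (LipschitzOnWith.of_le_add_mul (q * P).toNNReal fun c hc d hd => ?_).continuousOn
  rw [Real.coe_toNNReal _ hP]
  exact (hY c hc).le_add hpq (hck c hc) (hck d hd) hf dist_nonneg
    (fun v _ => by linarith [Real.dist_eq c d, neg_abs_le (c - d)]) (hY d hd) hv

theorem exists_pos_speed (hf : IsCombustionSource θ f) (hK : IsDrift k K)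
    (hKf : K 1 ^ q < q * ∫ x in (0 : ℝ)..1, f x) :
    ∃ c > 0, ∃ y, IsBackwardSol p q (fun v => c + k v) f y ∧ y θ = (c * θ + K θ) ^ q := by
  have hθ : θ ∈ Icc (0 : ℝ) 1 := Ioo_subset_Icc_self hf.threshold_mem
  have hex : ∀ c, ∃ y, c ≥ 0 → IsBackwardSol p q (fun v => c + k v) f y := fun c => by
    by_cases hc : c ≥ 0
    · have hKc := hK.const_add hc
      exact (exists_isBackwardSol hpq hKc.cont hKc.nonneg hf.toIsSource).imp fun y hy _ => hy
    · exact ⟨0, fun h => absurd h hc⟩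
  choose Y hY using hex
  have hpos : 0 < Y 0 θ - (0 * θ + K θ) ^ q := by
    by_contra! hle
    have hY0 : IsBackwardSol p q k f (Y 0) := by simpa only [zero_add] using hY 0 le_rfl
    rw [zero_mul, zero_add, sub_nonpos] at hle
    exact hKf.not_ge (hY0.mul_integral_le_rpow hpq hf hK hle)
  set m := q * ∫ x in (0 : ℝ)..1, f x
  have hm : 0 < m := mul_pos hpq.symm.pos hf.integral_pos
  set B := (m + 1) / θ
  have hB : 0 ≤ B := div_nonneg (by linarith) hθ.1
  have hneg : Y B θ - (B * θ + K θ) ^ q ≤ 0 := by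
    have hBθ : B * θ = m + 1 := div_mul_cancel₀ _ hf.threshold_mem.1.ne'
    have hYB : Y B θ ≤ m := (hY B hB).le_mul_integral hpq (hK.const_add hB).nonneg hf.toIsSource hθ
    have hKθ := hK.primitive_nonneg hθ
    linarith [Real.self_le_rpow_of_one_le (by linarith : 1 ≤ B * θ + K θ) hpq.symm.lt.le]
  have hcont : ContinuousOn (fun c => Y c θ - (c * θ + K θ) ^ q) (Icc 0 B) :=
    ((continuousOn_isBackwardSol_apply hpq hf.toIsSource hK.nonneg hY hθ).mono
      Icc_subset_Ici_self).sub (ContinuousOn.rpow_const (by fun_prop)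
        fun _ _ => Or.inr hpq.symm.nonneg)
  obtain ⟨c, hc, hYc⟩ := intermediate_value_Icc' hB hcont ⟨hneg, hpos.le⟩
  refine ⟨c, hc.1.lt_of_ne ?_, Y c, hY c hc.1, sub_eq_zero.1 hYc⟩
  rintro rfl
  exact hpos.ne' hYc

theorem speed_le_of_apply_eq_rpow {c d b : ℝ} {z : ℝ → ℝ} (hθ : θ ∈ Ioo (0 : ℝ) 1)
    (hd : ∀ v ∈ Icc (0 : ℝ) 1, 0 ≤ d + k v) (hdθ : 0 ≤ d * θ + b)
    (hy : IsBackwardSol p q (fun v => c + k v) f y) (hyθ : y θ = (c * θ + b) ^ q)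
    (hz : IsBackwardSol p q (fun v => d + k v) f z) (hzθ : z θ = (d * θ + b) ^ q) : c ≤ d := by
  by_contra! hdc
  have hyz : y θ ≤ z θ := hz.anti hpq hd (fun v _ => by linarith) hy (Ioo_subset_Icc_self hθ)
  have hlt : d * θ + b < c * θ + b := by linarith [mul_lt_mul_of_pos_right hdc hθ.1]
  linarith [Real.rpow_lt_rpow hdθ hlt hpq.symm.pos]

end Speed

/-! ### The constant `k(p)` and the combustion data -/

theorem holderConjugate_pconj {p : ℝ} (hp : 1 < p) : p.HolderConjugate (pconj p) :=
  Real.HolderConjugate.conjExponent hp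

theorem pconj_sub_one {p : ℝ} (hp : 1 < p) : pconj p - 1 = 1 / (p - 1) := by
  have hp1 : p - 1 ≠ 0 := (sub_pos.2 hp).ne'
  rw [pconj, div_sub_one hp1, sub_sub_cancel]

theorem kfun_pos {p : ℝ} (hp : 1 < p) : 0 < kfun p := by
  have hq := (holderConjugate_pconj hp).symm
  have hq0 := hq.pos
  have hq1 := hq.sub_one_pos
  unfold kfun
  split_ifs
  · exact one_div_pos.2 (sub_pos.2 (Real.one_lt_rpow one_lt_two hq1))
  · exact one_pos
  · positivity

theorem one_add_rpow_le_mul_one_add_rpow {q t : ℝ} (hq1 : 1 ≤ q) (hq2 : q ≤ 2) (ht : 0 ≤ t) :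
    (1 + t) ^ q ≤ q * (1 + t ^ q) := by
  have htwo : (2 : ℝ) ^ (q - 1) ≤ q := by
    simpa [one_add_one_eq_two] using rpow_one_add_le_one_add_mul_self (s := 1) (by norm_num)
      (sub_nonneg.2 hq1) (by linarith)
  calc (1 + t) ^ q ≤ 2 ^ (q - 1) * (1 ^ q + t ^ q) := by
        exact_mod_cast NNReal.rpow_add_le_mul_rpow_add_rpow 1 ⟨t, ht⟩ hq1
    _ ≤ q * (1 + t ^ q) := by
        rw [Real.one_rpow]
        exact mul_le_mul_of_nonneg_right htwo (by positivity)

theorem one_lt_sub_one_add_div {q t : ℝ} (hq1 : 1 < q) (hq2 : q ≤ 2) (ht : 0 < t) :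
    1 < q - 1 + (1 + q * t + t ^ q) / (1 + t) ^ q := by
  suffices 2 - q < (1 + q * t + t ^ q) / (1 + t) ^ q by linarith
  rw [lt_div_iff₀ (by positivity)]
  calc (2 - q) * (1 + t) ^ q ≤ (2 - q) * (q * (1 + t ^ q)) :=
        mul_le_mul_of_nonneg_left (one_add_rpow_le_mul_one_add_rpow hq1.le hq2 ht.le)
          (sub_nonneg.2 hq2)
    _ = (1 + t ^ q) - (q - 1) ^ 2 * (1 + t ^ q) := by ring
    _ < 1 + q * t + t ^ q := by
        have hsq : 0 ≤ (q - 1) ^ 2 * (1 + t ^ q) := by positivity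
        have hqt : 0 < q * t := by positivity
        linarith

theorem kfun_lt_pconj {p : ℝ} (hp : 1 < p) : kfun p < pconj p := by
  have hq := (holderConjugate_pconj hp).symm
  have hp1 : 0 < p - 1 := sub_pos.2 hp
  unfold kfun
  split_ifs with h2 h2'
  · have hq2 : 1 ≤ pconj p - 1 := by
      rw [pconj_sub_one hp, le_div_iff₀ hp1]
      linarith
    have hpow := Real.self_le_rpow_of_one_le one_le_two hq2
    exact ((div_le_one (by linarith)).2 (by linarith)).trans_lt hq.lt
  · exact hq.lt
  · have hq2 : pconj p - 1 ≤ 1 := by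
      rw [pconj_sub_one hp, div_le_one hp1]
      linarith
    rw [← one_div_mul_eq_div (pconj p - 2) (pconj p), Real.rpow_mul hq.sub_one_pos.le]
    exact div_lt_self hq.pos (one_lt_sub_one_add_div hq.lt (by linarith)
      (Real.rpow_pos_of_pos hq.sub_one_pos _))

theorem kfun_mul_rpow_lt_pconj_mul_rpow {p x : ℝ} (hp : 1 < p) (hx : 0 < x) :
    (kfun p * x) ^ (1 / pconj p) < (pconj p * x) ^ (1 / pconj p) :=
  Real.rpow_lt_rpow (mul_pos (kfun_pos hp) hx).le
    (mul_lt_mul_of_pos_right (kfun_lt_pconj hp) hx) (holderConjugate_pconj hp).symm.one_div_pos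

theorem neg_sInf_image_lt_iff {h : ℝ → ℝ} {s : Set ℝ} {c : ℝ} (hs : IsCompact s)
    (hne : s.Nonempty) (hh : ContinuousOn h s) :
    -sInf (h '' s) < c ↔ ∀ v ∈ s, 0 < c + h v := by
  have himage := hs.image_of_continuousOn hh
  obtain ⟨v, hv, hmin⟩ := himage.sInf_mem (hne.image h)
  refine ⟨fun hc w hw => ?_, fun hc => ?_⟩
  · linarith [csInf_le himage.bddBelow (mem_image_of_mem h hw)]
  · linarith [hc v hv]

namespace CombSetup

variable {p θ : ℝ} {D H h g : ℝ → ℝ} (S : CombSetup p θ D H h g)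
include S

theorem hasDerivAt {v : ℝ} (hv : v ∈ Ioo (0 : ℝ) 1) : HasDerivAt H (h v) v :=
  (S.hHd v (Ioo_subset_Icc_self hv)).hasDerivAt (Icc_mem_nhds hv.1 hv.2)

theorem g_nonneg {v : ℝ} (hv : v ∈ Ioo (0 : ℝ) 1) : 0 ≤ g v := by
  rcases le_or_gt v θ with hvθ | hvθ
  · exact (S.hg0 v ⟨hv.1.le, hvθ⟩).ge
  · exact (S.hgpos v ⟨hvθ, hv.2⟩).le

theorem isDrift {c : ℝ} (hch : ∀ v ∈ Icc (0 : ℝ) 1, 0 ≤ c + h v) :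
    IsDrift (fun v => c + h v) fun v => c * v + H v where
  cont := continuousOn_const.add S.hh
  nonneg := hch
  primitive_cont := (continuousOn_const.mul continuousOn_id).add S.hH.continuousOn
  hasDerivAt v hv :=
    (((hasDerivAt_id v).const_mul c).add (S.hasDerivAt hv)).congr_deriv (by rw [mul_one])
  primitive_zero := by simp [S.hH0]

theorem isCombustionSource : IsCombustionSource θ fun v => D v ^ (pconj p - 1) * g v where
  cont := (S.hD.continuousOn.rpow_const fun v hv => Or.inl (S.hDpos v hv).ne').mul
    (S.hgc.mono Ioo_subset_Icc_self)
  integrable := S.hInt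
  nonneg v hv := mul_nonneg (Real.rpow_nonneg (S.hDpos v hv).le _) (S.g_nonneg hv)
  threshold_mem := ⟨S.hθ0, S.hθ1⟩
  zero v hv := by rw [S.hg0 v ⟨hv.1.le, hv.2⟩, mul_zero]
  pos v hv :=
    mul_pos (Real.rpow_pos_of_pos (S.hDpos v ⟨S.hθ0.trans hv.1, hv.2⟩) _) (S.hgpos v hv)

end CombSetup

/-! ### From waves to the first-order problem -/

theorem flux_pos_iff {p : ℝ} {D u : ℝ → ℝ} {ξ : ℝ} (hD : 0 < D (u ξ)) :
    0 < flux p D u ξ ↔ 0 < deriv u ξ := by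
  rw [flux, mul_pos_iff_of_pos_left hD]
  exact ⟨fun h => pos_of_mul_pos_right h (by positivity), fun h => by positivity⟩

theorem neg_flux_rpow_pconj_sub_one {p : ℝ} (hp : 1 < p) {D u : ℝ → ℝ} {ξ : ℝ} (hD : 0 < D (u ξ))
    (hd : deriv u ξ ≤ 0) :
    (-flux p D u ξ) ^ (pconj p - 1) = D (u ξ) ^ (pconj p - 1) * (-deriv u ξ) := by
  have hd' : 0 ≤ -deriv u ξ := neg_nonneg.2 hd
  have hp1 : p - 1 ≠ 0 := (sub_pos.2 hp).ne'
  have hflux : -flux p D u ξ = D (u ξ) * (-deriv u ξ) ^ (p - 1) := by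
    rw [flux, abs_of_nonpos hd, ← mul_neg, ← mul_neg,
      ← Real.rpow_add_one' hd' (by rwa [show p - 2 + 1 = p - 1 by ring]),
      show p - 2 + 1 = p - 1 by ring]
  rw [hflux, Real.mul_rpow hD.le (Real.rpow_nonneg hd' _), pconj_sub_one hp, one_div,
    Real.rpow_rpow_inv hd' hp1]

/-- The diffusive flux, extended by `0` to the points where `u` is `0` or `1`. -/
noncomputable def fluxExt (p : ℝ) (D u : ℝ → ℝ) : ℝ → ℝ :=
  fun ξ => if u ξ ∈ Ioo (0 : ℝ) 1 then flux p D u ξ else 0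

theorem fluxExt_eq_flux {p : ℝ} {D u : ℝ → ℝ} {ξ : ℝ} (hξ : u ξ ∈ Ioo (0 : ℝ) 1) :
    fluxExt p D u ξ = flux p D u ξ :=
  if_pos hξ

theorem fluxExt_eq_zero {p : ℝ} {D u : ℝ → ℝ} {ξ : ℝ} (hξ : u ξ ∉ Ioo (0 : ℝ) 1) :
    fluxExt p D u ξ = 0 :=
  if_neg hξ

namespace IsTWSol

variable {p c θ : ℝ} {D H h g u y : ℝ → ℝ} (hu : IsTWSol p c D h g u)
include hu

theorem isOpen_setOf_mem_Ioo : IsOpen {ξ | u ξ ∈ Ioo (0 : ℝ) 1} :=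
  isOpen_Ioo.preimage hu.cont

theorem hasDerivAt {ξ : ℝ} (hξ : u ξ ∈ Ioo (0 : ℝ) 1) : HasDerivAt u (deriv u ξ) ξ :=
  ((hu.smooth.differentiableOn one_ne_zero).differentiableAt
    (hu.isOpen_setOf_mem_Ioo.mem_nhds hξ)).hasDerivAt

theorem continuous_fluxExt : Continuous (fluxExt p D u) :=
  hu.flux_cont

theorem hasDerivAt_fluxExt {ξ : ℝ} (hξ : u ξ ∈ Ioo (0 : ℝ) 1) :
    HasDerivAt (fluxExt p D u) (-(c + h (u ξ)) * deriv u ξ - g (u ξ)) ξ := by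
  refine (hu.eqn ξ hξ).congr_of_eventuallyEq ?_
  filter_upwards [hu.isOpen_setOf_mem_Ioo.mem_nhds hξ] with x hx using fluxExt_eq_flux hx

theorem tendsto_fluxExt_atTop : Tendsto (fluxExt p D u) atTop (nhds 0) := by
  rw [Metric.tendsto_nhds]
  intro ε hε
  obtain ⟨δ, hδ, hδu⟩ := hu.flux_to0 ε hε
  filter_upwards [hu.lim_top.eventually (gt_mem_nhds hδ)] with ξ hξ
  rw [dist_zero_right, Real.norm_eq_abs]
  by_cases hmem : u ξ ∈ Ioo (0 : ℝ) 1
  · exact fluxExt_eq_flux (p := p) (D := D) hmem ▸ hδu ξ hmem hξ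
  · rwa [fluxExt_eq_zero hmem, abs_zero]

theorem tendsto_fluxExt_atBot : Tendsto (fluxExt p D u) atBot (nhds 0) := by
  rw [Metric.tendsto_nhds]
  intro ε hε
  obtain ⟨δ, hδ, hδu⟩ := hu.flux_to1 ε hε
  filter_upwards [hu.lim_bot.eventually (lt_mem_nhds (sub_lt_self 1 hδ))] with ξ hξ
  rw [dist_zero_right, Real.norm_eq_abs]
  by_cases hmem : u ξ ∈ Ioo (0 : ℝ) 1
  · exact fluxExt_eq_flux (p := p) (D := D) hmem ▸ hδu ξ hmem hξ
  · rwa [fluxExt_eq_zero hmem, abs_zero]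

theorem tendsto_comp_atTop {φ : ℝ → ℝ} (hφ : ContinuousOn φ (Icc 0 1)) :
    Tendsto (fun ξ => φ (u ξ)) atTop (nhds (φ 0)) :=
  (hφ 0 (left_mem_Icc.2 zero_le_one)).tendsto.comp
    (tendsto_nhdsWithin_iff.2 ⟨hu.lim_top, .of_forall hu.mem⟩)

theorem tendsto_comp_atBot {φ : ℝ → ℝ} (hφ : ContinuousOn φ (Icc 0 1)) :
    Tendsto (fun ξ => φ (u ξ)) atBot (nhds (φ 1)) :=
  (hφ 1 (right_mem_Icc.2 zero_le_one)).tendsto.comp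
    (tendsto_nhdsWithin_iff.2 ⟨hu.lim_bot, .of_forall hu.mem⟩)

variable (S : CombSetup p θ D H h g) (hch : ∀ v ∈ Icc (0 : ℝ) 1, 0 ≤ c + h v)
include S hch

theorem fluxExt_nonpos (ξ : ℝ) : fluxExt p D u ξ ≤ 0 := by
  refine nonpos_of_tendsto_atBot_zero (b := ξ) hu.continuous_fluxExt.continuousOn
    hu.tendsto_fluxExt_atBot (fun x _ hpos => ?_) le_rfl
  have hx : u x ∈ Ioo (0 : ℝ) 1 := by
    by_contra hx
    exact hpos.ne' (fluxExt_eq_zero hx)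
  rw [fluxExt_eq_flux hx, flux_pos_iff (S.hDpos _ hx)] at hpos
  refine ⟨_, ?_, hu.hasDerivAt_fluxExt hx⟩
  linarith [mul_nonneg (hch _ (hu.mem x)) hpos.le, S.g_nonneg hx]

theorem deriv_nonpos {ξ : ℝ} (hξ : u ξ ∈ Ioo (0 : ℝ) 1) : deriv u ξ ≤ 0 := by
  have hflux := hu.fluxExt_nonpos S hch ξ
  rwa [fluxExt_eq_flux hξ, ← not_lt, flux_pos_iff (S.hDpos _ hξ), not_lt] at hflux

-- `u` need not be differentiable where it reaches `0` or `1`, but these are only two values.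
theorem antitone : Antitone u := by
  refine antitoneOn_univ.1 (antitoneOn_of_hasDerivAt_nonpos_of_dense (U := {0, 1}ᶜ)
    ordConnected_univ hu.cont.continuousOn (toFinite _).isClosed.isOpen_compl
    ((toFinite _).countable.dense_compl ℝ) fun x _ hx => ?_)
  have hx' : u x ≠ 0 ∧ u x ≠ 1 := by simpa using hx
  have hmem : u x ∈ Ioo (0 : ℝ) 1 :=
    ⟨(hu.mem x).1.lt_of_ne hx'.1.symm, (hu.mem x).2.lt_of_ne hx'.2⟩
  exact ⟨_, hu.deriv_nonpos S hch hmem, hu.hasDerivAt hmem⟩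

theorem fluxExt_add_eq_zero {ξ : ℝ} (hξ : u ξ ≤ θ) :
    fluxExt p D u ξ + (c * u ξ + H (u ξ)) = 0 := by
  have hK := S.isDrift hch
  have hKu : Continuous fun x => c * u x + H (u x) :=
    hK.primitive_cont.comp_continuous hu.cont hu.mem
  have hlim : Tendsto (fun x => c * u x + H (u x)) atTop (nhds 0) :=
    hK.primitive_zero ▸ hu.tendsto_comp_atTop hK.primitive_cont
  refine eq_of_tendsto_atTop_of_hasDerivAt_zero
    (f := fun x => fluxExt p D u x + (c * u x + H (u x)))
    (hu.continuous_fluxExt.add hKu).continuousOn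
    (by simpa using hu.tendsto_fluxExt_atTop.add hlim) fun x hx hne => ?_
  have hxθ : u x ≤ θ := (hu.antitone S hch (mem_Ioi.1 hx).le).trans hξ
  have hx0 : u x ≠ 0 := fun hx0 => hne (by
    rw [fluxExt_eq_zero fun hmem => hmem.1.ne' hx0, hx0, mul_zero, S.hH0, add_zero, add_zero])
  have hmem : u x ∈ Ioo (0 : ℝ) 1 := ⟨(hu.mem x).1.lt_of_ne hx0.symm, hxθ.trans_lt S.hθ1⟩
  refine ((hu.hasDerivAt_fluxExt hmem).add
    ((hK.hasDerivAt _ hmem).comp x (hu.hasDerivAt hmem))).congr_deriv ?_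
  rw [S.hg0 _ ⟨hmem.1.le, hxθ⟩]
  ring

variable
  (hy : IsBackwardSol p (pconj p) (fun v => c + h v) (fun v => D v ^ (pconj p - 1) * g v) y)
include hy

theorem exists_hasDerivAt_neg_fluxExt_rpow_sub {ξ : ℝ} (hξ : u ξ ∈ Ioo (0 : ℝ) 1) :
    ∃ s ≤ 0, HasDerivAt (fun x => (-fluxExt p D u x) ^ pconj p - y (u x))
      (s * (max ((-fluxExt p D u ξ) ^ pconj p) 0 ^ (1 / p) - max (y (u ξ)) 0 ^ (1 / p))) ξ := by
  have hpq := holderConjugate_pconj S.hp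
  have hd := hu.deriv_nonpos S hch hξ
  have hF : 0 ≤ -fluxExt p D u ξ := neg_nonneg.2 (hu.fluxExt_nonpos S hch ξ)
  refine ⟨pconj p * (c + h (u ξ)) * deriv u ξ, mul_nonpos_of_nonneg_of_nonpos
    (mul_nonneg hpq.symm.nonneg (hch _ (hu.mem ξ))) hd, ?_⟩
  refine (((hu.hasDerivAt_fluxExt hξ).neg.rpow_const (Or.inr hpq.symm.lt.le)).sub
    ((hy.eqn _ hξ).comp ξ (hu.hasDerivAt hξ))).congr_deriv ?_
  rw [max_eq_left (Real.rpow_nonneg hF _), rpow_rpow_one_div_eq hpq hF, Pi.neg_apply,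
    fluxExt_eq_flux hξ, neg_flux_rpow_pconj_sub_one S.hp (S.hDpos _ hξ) hd]
  ring

theorem neg_fluxExt_rpow_eq {ξ : ℝ} (hξ : 0 < u ξ) : (-fluxExt p D u ξ) ^ pconj p = y (u ξ) := by
  have hpq := holderConjugate_pconj S.hp
  have hlim : Tendsto (fun x => (-fluxExt p D u x) ^ pconj p - y (u x)) atBot (nhds 0) := by
    simpa [Real.zero_rpow hpq.symm.ne_zero, hy.terminal] using
      (hu.tendsto_fluxExt_atBot.neg.rpow_const (p := pconj p) (Or.inr hpq.symm.nonneg)).sub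
        (hu.tendsto_comp_atBot hy.cont)
  have hcont : Continuous fun x => (-fluxExt p D u x) ^ pconj p - y (u x) :=
    (hu.continuous_fluxExt.neg.rpow_const fun _ => Or.inr hpq.symm.nonneg).sub
      (hy.cont.comp_continuous hu.cont hu.mem)
  have hd : ∀ x ∈ Iio ξ, (-fluxExt p D u x) ^ pconj p ≠ y (u x) → ∃ s ≤ 0,
      HasDerivAt (fun x => (-fluxExt p D u x) ^ pconj p - y (u x))
        (s * (max ((-fluxExt p D u x) ^ pconj p) 0 ^ (1 / p) - max (y (u x)) 0 ^ (1 / p))) x := by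
    intro x hx hne
    have hx1 : u x ≠ 1 := fun hx1 => hne (by
      rw [fluxExt_eq_zero fun hmem => hmem.2.ne hx1, hx1, hy.terminal, neg_zero,
        Real.zero_rpow hpq.symm.ne_zero])
    exact hu.exists_hasDerivAt_neg_fluxExt_rpow_sub S hch hy
      ⟨hξ.trans_le (hu.antitone S hch (mem_Iio.1 hx).le), (hu.mem x).2.lt_of_ne hx1⟩
  have hmono := monotone_max_zero_rpow hpq.one_div_nonneg
  refine le_antisymm (sub_nonpos.1 ?_) (sub_nonneg.1 (neg_nonpos.1 ?_))
  · refine nonpos_of_tendsto_atBot_zero hcont.continuousOn hlim (fun x hx hpos => ?_) le_rfl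
    obtain ⟨s, hs, hds⟩ := hd x hx (sub_pos.1 hpos).ne'
    exact ⟨_, mul_nonpos_of_nonpos_of_nonneg hs (sub_nonneg.2 (hmono (sub_pos.1 hpos).le)), hds⟩
  · refine nonpos_of_tendsto_atBot_zero (b := ξ) hcont.neg.continuousOn
      (neg_zero (G := ℝ) ▸ hlim.neg) (fun x hx hpos => ?_) le_rfl
    have hlt := sub_neg.1 (neg_pos.1 hpos)
    obtain ⟨s, hs, hds⟩ := hd x hx hlt.ne
    exact ⟨_, neg_nonpos.2 (mul_nonneg_of_nonpos_of_nonpos hs (sub_nonpos.2 (hmono hlt.le))),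
      hds.neg⟩

theorem backwardSol_threshold : y θ = (c * θ + H θ) ^ pconj p := by
  obtain ⟨ξ, hξ⟩ : ∃ ξ, u ξ = θ := mem_range_of_exists_le_of_exists_ge hu.cont
    (hu.lim_top.eventually (ge_mem_nhds S.hθ0)).exists
    (hu.lim_bot.eventually (le_mem_nhds S.hθ1)).exists
  have hflux := hu.fluxExt_add_eq_zero S hch hξ.le
  rw [← hξ, ← hu.neg_fluxExt_rpow_eq S hch hy (hξ ▸ S.hθ0), ← eq_neg_of_add_eq_zero_right hflux]

end IsTWSol

/-! ### From the first-order problem to waves -/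

/-- A decreasing profile `u : ℝ → [a, b]` inverting `T` on `(a, b)`. Beyond the values of `T`, it
can only stay at the end points `a` and `b`. -/
structure IsProfile (a b : ℝ) (T u : ℝ → ℝ) : Prop where
  antitone : Antitone u
  mem : ∀ ξ, u ξ ∈ Icc a b
  left_inv : ∀ v ∈ Ioo a b, u (T v) = v

theorem exists_isProfile {a b : ℝ} {T : ℝ → ℝ} (hab : a ≤ b) (hT : StrictAntiOn T (Ioo a b)) :
    ∃ u, IsProfile a b T u := by
  have hinv : ∀ v ∈ Ioo a b, Function.invFunOn T (Ioo a b) (T v) = v := fun v hv =>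
    hT.injOn.leftInvOn_invFunOn hv
  have hanti : AntitoneOn (Function.invFunOn T (Ioo a b)) (T '' Ioo a b) := by
    rintro _ ⟨v, hv, rfl⟩ _ ⟨w, hw, rfl⟩ hvw
    rw [hinv v hv, hinv w hw]
    exact (hT.le_iff_ge hv hw).1 hvw
  have hsub : Function.invFunOn T (Ioo a b) '' (T '' Ioo a b) ⊆ Icc a b := by
    rintro _ ⟨_, ⟨v, hv, rfl⟩, rfl⟩
    exact (hinv v hv).symm ▸ Ioo_subset_Icc_self hv
  obtain ⟨u, hu, heq⟩ :=
    hanti.exists_antitone_extension (bddBelow_Icc.mono hsub) (bddAbove_Icc.mono hsub)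
  refine ⟨fun ξ => projIcc a b hab (u ξ), fun ξ η h => monotone_projIcc hab (hu h),
    fun ξ => (projIcc a b hab (u ξ)).2, fun v hv => ?_⟩
  rw [← heq (mem_image_of_mem T hv), hinv v hv, projIcc_of_mem hab (Ioo_subset_Icc_self hv)]

namespace IsProfile

variable {a b : ℝ} {T u : ℝ → ℝ} (hu : IsProfile a b T u)
include hu

theorem le_apply {v ξ : ℝ} (hv : v ∈ Ioo a b) (hξ : ξ ≤ T v) : v ≤ u ξ :=
  hu.left_inv v hv ▸ hu.antitone hξ

theorem apply_le {v ξ : ℝ} (hv : v ∈ Ioo a b) (hξ : T v ≤ ξ) : u ξ ≤ v :=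
  hu.left_inv v hv ▸ hu.antitone hξ

theorem continuous : Continuous u := by
  refine continuous_iff_continuousAt.2 fun ξ => tendsto_order.2 ⟨fun r hr => ?_, fun r hr => ?_⟩
  · rcases lt_or_ge r a with hra | hra
    · exact .of_forall fun x => hra.trans_le (hu.mem x).1
    · obtain ⟨v, hrv, hvξ⟩ := exists_between hr
      have hv : v ∈ Ioo a b := ⟨hra.trans_lt hrv, hvξ.trans_le (hu.mem ξ).2⟩
      have hξ : ξ < T v := not_le.1 fun h => (hu.apply_le hv h).not_gt hvξ
      filter_upwards [gt_mem_nhds hξ] with x hx using hrv.trans_le (hu.le_apply hv hx.le)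
  · rcases lt_or_ge b r with hrb | hrb
    · exact .of_forall fun x => (hu.mem x).2.trans_lt hrb
    · obtain ⟨v, hξv, hvr⟩ := exists_between hr
      have hv : v ∈ Ioo a b := ⟨(hu.mem ξ).1.trans_lt hξv, hvr.trans_le hrb⟩
      have hξ : T v < ξ := not_le.1 fun h => (hu.le_apply hv h).not_gt hξv
      filter_upwards [lt_mem_nhds hξ] with x hx using (hu.apply_le hv hx.le).trans_lt hvr

theorem tendsto_atBot (hab : a < b) : Tendsto u atBot (nhds b) := by
  refine tendsto_order.2 ⟨fun r hr => ?_, fun r hr => .of_forall fun x => (hu.mem x).2.trans_lt hr⟩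
  obtain ⟨v, hrv, hvb⟩ := exists_between (max_lt hr hab)
  filter_upwards [eventually_le_atBot (T v)] with x hx using
    (max_lt_iff.1 hrv).1.trans_le (hu.le_apply ⟨(max_lt_iff.1 hrv).2, hvb⟩ hx)

theorem tendsto_atTop (hab : a < b) : Tendsto u atTop (nhds a) := by
  refine tendsto_order.2 ⟨fun r hr => .of_forall fun x => hr.trans_le (hu.mem x).1, fun r hr => ?_⟩
  obtain ⟨v, hav, hvr⟩ := exists_between (lt_min hr hab)
  filter_upwards [eventually_ge_atTop (T v)] with x hx using
    (hu.apply_le ⟨hav, (lt_min_iff.1 hvr).2⟩ hx).trans_lt (lt_min_iff.1 hvr).1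

theorem right_inv (hT : ContinuousOn T (Ioo a b)) {ξ : ℝ} (hξ : u ξ ∈ Ioo a b) :
    T (u ξ) = ξ := by
  have hTξ := (hT.continuousAt (Ioo_mem_nhds hξ.1 hξ.2)).tendsto
  refine le_antisymm (le_of_tendsto (hTξ.mono_left (nhdsWithin_le_nhds (s := Ioi (u ξ)))) ?_)
    (ge_of_tendsto (hTξ.mono_left (nhdsWithin_le_nhds (s := Iio (u ξ)))) ?_)
  · filter_upwards [Ioo_mem_nhdsGT hξ.2] with v hv
    exact le_of_not_ge fun h => (hu.le_apply ⟨hξ.1.trans hv.1, hv.2⟩ h).not_gt hv.1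
  · filter_upwards [Ioo_mem_nhdsLT hξ.1] with v hv
    exact le_of_not_ge fun h => (hu.apply_le ⟨hv.1, hv.2.trans hξ.2⟩ h).not_gt hv.2

theorem hasDerivAt {T' : ℝ → ℝ} (hT : ∀ v ∈ Ioo a b, HasDerivAt T (T' v) v)
    (hT' : ∀ v ∈ Ioo a b, T' v ≠ 0) {ξ : ℝ} (hξ : u ξ ∈ Ioo a b) :
    HasDerivAt u (T' (u ξ))⁻¹ ξ := by
  refine .of_local_left_inverse hu.continuous.continuousAt (hT _ hξ) (hT' _ hξ) ?_
  filter_upwards [(isOpen_Ioo.preimage hu.continuous).mem_nhds hξ] with x hx using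
    hu.right_inv (fun v hv => (hT v hv).continuousAt.continuousWithinAt) hx

end IsProfile

theorem exists_hasDerivAt_of_continuousOn_Ioo {f : ℝ → ℝ} {a b : ℝ}
    (hf : ContinuousOn f (Ioo a b)) : ∃ F : ℝ → ℝ, ∀ v ∈ Ioo a b, HasDerivAt F (f v) v := by
  refine ⟨fun v => ∫ x in (a + b) / 2..v, f x, fun v hv => ?_⟩
  have hab : (a + b) / 2 ∈ Ioo a b := ⟨by linarith [hv.1, hv.2], by linarith [hv.1, hv.2]⟩
  exact intervalIntegral.integral_hasDerivAt_right
    (hf.mono (ordConnected_Ioo.uIcc_subset hab hv)).intervalIntegrable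
    (hf.stronglyMeasurableAtFilter isOpen_Ioo v hv) (hf.continuousAt (Ioo_mem_nhds hv.1 hv.2))

/-- A solution of `u' = -w(u)` decreasing from `1` to `0`. The equation is imposed where
`0 < u < 1`: the profile may reach `0` or `1` at a finite point. -/
structure IsWaveProfile (w u : ℝ → ℝ) : Prop where
  cont : Continuous u
  mem : ∀ ξ, u ξ ∈ Icc (0 : ℝ) 1
  hasDerivAt : ∀ ξ, u ξ ∈ Ioo (0 : ℝ) 1 → HasDerivAt u (-w (u ξ)) ξ
  lim_bot : Tendsto u atBot (nhds 1)
  lim_top : Tendsto u atTop (nhds 0)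

theorem exists_isWaveProfile {w : ℝ → ℝ} (hw : ContinuousOn w (Ioo 0 1))
    (hpos : ∀ v ∈ Ioo (0 : ℝ) 1, 0 < w v) : ∃ u, IsWaveProfile w u := by
  have hw' : ∀ v ∈ Ioo (0 : ℝ) 1, -(w v)⁻¹ < 0 := fun v hv => neg_neg_of_pos (inv_pos.2 (hpos v hv))
  obtain ⟨T, hT⟩ :=
    exists_hasDerivAt_of_continuousOn_Ioo (hw.inv₀ fun v hv => (hpos v hv).ne').neg
  have hanti : StrictAntiOn T (Ioo 0 1) := by
    refine strictAntiOn_of_deriv_neg (convex_Ioo 0 1)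
      (fun v hv => (hT v hv).continuousAt.continuousWithinAt) fun v hv => ?_
    rw [interior_Ioo] at hv
    exact (hT v hv).deriv ▸ hw' v hv
  obtain ⟨u, hu⟩ := exists_isProfile zero_le_one hanti
  refine ⟨u, hu.continuous, hu.mem, fun ξ hξ => ?_, hu.tendsto_atBot one_pos,
    hu.tendsto_atTop one_pos⟩
  exact (hu.hasDerivAt hT (fun v hv => (hw' v hv).ne) hξ).congr_deriv
    (by rw [Pi.neg_apply, Pi.inv_apply, inv_neg, inv_inv])

/-- The slope `-u'` of a traveling wave at height `v`, in terms of `y = |flux| ^ p'`. -/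
noncomputable def waveSlope (p : ℝ) (D y : ℝ → ℝ) (v : ℝ) : ℝ :=
  y v ^ (1 / p) / D v ^ (pconj p - 1)

theorem mul_waveSlope_rpow {p : ℝ} (hp : 1 < p) {D y : ℝ → ℝ} {v : ℝ} (hD : 0 < D v)
    (hy : 0 ≤ y v) : D v * waveSlope p D y v ^ (p - 1) = y v ^ (1 / pconj p) := by
  have hp1 : p - 1 ≠ 0 := (sub_pos.2 hp).ne'
  have hexp : 1 / p * (p - 1) = 1 / pconj p := by rw [pconj, one_div_div]; ring
  rw [waveSlope, Real.div_rpow (Real.rpow_nonneg hy _) (Real.rpow_nonneg hD.le _),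
    ← Real.rpow_mul hy, hexp, pconj_sub_one hp, one_div (p - 1), Real.rpow_inv_rpow hD.le hp1,
    mul_div_cancel₀ _ hD.ne']

namespace IsFOSol

variable {p c θ : ℝ} {D H h g y u : ℝ → ℝ} (hy : IsFOSol p c D h g y)
include hy

theorem isBackwardSol :
    IsBackwardSol p (pconj p) (fun v => c + h v) (fun v => D v ^ (pconj p - 1) * g v) y :=
  ⟨hy.cont, hy.eqn, hy.y1⟩

theorem eq_zero {v : ℝ} (hv : v ∈ Icc (0 : ℝ) 1) (hv' : v ∉ Ioo (0 : ℝ) 1) : y v = 0 := by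
  rcases (Icc_sdiff_Ioo_same (zero_le_one' ℝ)).subset ⟨hv, hv'⟩ with rfl | rfl
  exacts [hy.y0, hy.y1]

variable (S : CombSetup p θ D H h g)
include S

theorem waveSlope_pos {v : ℝ} (hv : v ∈ Ioo (0 : ℝ) 1) : 0 < waveSlope p D y v :=
  div_pos (Real.rpow_pos_of_pos (hy.pos v hv) _) (Real.rpow_pos_of_pos (S.hDpos v hv) _)

theorem continuousOn_waveSlope : ContinuousOn (waveSlope p D y) (Ioo 0 1) :=
  ((hy.cont.mono Ioo_subset_Icc_self).rpow_const fun v hv => Or.inl (hy.pos v hv).ne').div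
    (S.hD.continuousOn.rpow_const fun v hv => Or.inl (S.hDpos v hv).ne')
    fun v hv => (Real.rpow_pos_of_pos (S.hDpos v hv) _).ne'

theorem continuousOn_rpow_one_div : ContinuousOn (fun v => y v ^ (1 / pconj p)) (Icc 0 1) :=
  hy.cont.rpow_const fun _ _ => Or.inr (holderConjugate_pconj S.hp).symm.one_div_nonneg

variable (hu : IsWaveProfile (waveSlope p D y) u)
include hu

theorem flux_eq {ξ : ℝ} (hξ : u ξ ∈ Ioo (0 : ℝ) 1) : flux p D u ξ = -y (u ξ) ^ (1 / pconj p) := by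
  have hw := hy.waveSlope_pos S hξ
  rw [← mul_waveSlope_rpow S.hp (S.hDpos _ hξ) (hy.pos _ hξ).le, flux,
    (hu.hasDerivAt ξ hξ).deriv, abs_neg, abs_of_pos hw, show p - 1 = p - 2 + 1 by ring,
    Real.rpow_add_one hw.ne', mul_neg, mul_neg]

theorem fluxExt_eq : fluxExt p D u = fun ξ => -y (u ξ) ^ (1 / pconj p) := by
  funext ξ
  by_cases hξ : u ξ ∈ Ioo (0 : ℝ) 1
  · rw [fluxExt_eq_flux hξ, hy.flux_eq S hu hξ]
  · rw [fluxExt_eq_zero hξ, hy.eq_zero (hu.mem ξ) hξ,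
      Real.zero_rpow (holderConjugate_pconj S.hp).symm.one_div_pos.ne', neg_zero]

theorem contDiffOn : ContDiffOn ℝ 1 u {ξ | u ξ ∈ Ioo (0 : ℝ) 1} := by
  have hopen : IsOpen {ξ | u ξ ∈ Ioo (0 : ℝ) 1} := isOpen_Ioo.preimage hu.cont
  rw [contDiffOn_one_iff_derivWithin hopen.uniqueDiffOn]
  refine ⟨fun ξ hξ => (hu.hasDerivAt ξ hξ).differentiableAt.differentiableWithinAt, ?_⟩
  refine ((hy.continuousOn_waveSlope S).comp hu.cont.continuousOn fun ξ hξ => hξ).neg.congr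
    fun ξ hξ => ?_
  rw [derivWithin_of_isOpen hopen hξ, (hu.hasDerivAt ξ hξ).deriv]
  rfl

theorem hasDerivAt_flux {ξ : ℝ} (hξ : u ξ ∈ Ioo (0 : ℝ) 1) :
    HasDerivAt (flux p D u) (-(c + h (u ξ)) * deriv u ξ - g (u ξ)) ξ := by
  have hyξ := hy.pos _ hξ
  have hz := (hy.isBackwardSol.hasDerivAt_rpow_one_div (holderConjugate_pconj S.hp) hξ hyξ).comp ξ
    (hu.hasDerivAt ξ hξ)
  refine (hz.neg.congr_of_eventuallyEq ?_).congr_deriv ?_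
  · filter_upwards [(isOpen_Ioo.preimage hu.cont).mem_nhds hξ] with x hx using hy.flux_eq S hu hx
  · have hyp : y (u ξ) ^ (1 / p) ≠ 0 := (Real.rpow_pos_of_pos hyξ _).ne'
    have hDq : D (u ξ) ^ (pconj p - 1) ≠ 0 := (Real.rpow_pos_of_pos (S.hDpos _ hξ) _).ne'
    rw [(hu.hasDerivAt ξ hξ).deriv, waveSlope]
    field_simp

theorem abs_flux_lt_of_abs_sub_lt {a : ℝ} (ha : a ∈ Icc (0 : ℝ) 1) (hya : y a = 0) {ε : ℝ}
    (hε : 0 < ε) :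
    ∃ δ > 0, ∀ ξ, u ξ ∈ Ioo (0 : ℝ) 1 → |u ξ - a| < δ → |flux p D u ξ| < ε := by
  obtain ⟨δ, hδ, hδz⟩ := Metric.continuousWithinAt_iff.1 (hy.continuousOn_rpow_one_div S a ha) ε hε
  refine ⟨δ, hδ, fun ξ hξ hlt => ?_⟩
  have hlt' := hδz (hu.mem ξ) (by rwa [Real.dist_eq])
  rwa [hya, Real.zero_rpow (holderConjugate_pconj S.hp).symm.one_div_pos.ne', Real.dist_eq,
    sub_zero, ← abs_neg, ← hy.flux_eq S hu hξ] at hlt'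

theorem isTWSol : IsTWSol p c D h g u where
  cont := hu.cont
  mem := hu.mem
  smooth := hy.contDiffOn S hu
  eqn _ hξ := hy.hasDerivAt_flux S hu hξ
  flux_cont := by
    have hcont : Continuous fun ξ => -y (u ξ) ^ (1 / pconj p) :=
      ((hy.continuousOn_rpow_one_div S).comp_continuous hu.cont hu.mem).neg
    rwa [← hy.fluxExt_eq S hu] at hcont
  flux_to0 ε hε := by
    obtain ⟨δ, hδ, hlt⟩ := hy.abs_flux_lt_of_abs_sub_lt S hu (left_mem_Icc.2 zero_le_one) hy.y0 hε
    exact ⟨δ, hδ, fun ξ hξ hx => hlt ξ hξ (by rwa [sub_zero, abs_of_pos hξ.1])⟩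
  flux_to1 ε hε := by
    obtain ⟨δ, hδ, hlt⟩ := hy.abs_flux_lt_of_abs_sub_lt S hu (right_mem_Icc.2 zero_le_one) hy.y1 hε
    exact ⟨δ, hδ, fun ξ hξ hx => hlt ξ hξ (abs_lt.2 ⟨by linarith, by linarith [hξ.2]⟩)⟩
  lim_bot := hu.lim_bot
  lim_top := hu.lim_top

end IsFOSol

theorem CombSetup.exists_isTWSol {p θ c : ℝ} {D H h g y : ℝ → ℝ} (S : CombSetup p θ D H h g)
    (hch : ∀ v ∈ Icc (0 : ℝ) 1, 0 < c + h v)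
    (hy : IsBackwardSol p (pconj p) (fun v => c + h v) (fun v => D v ^ (pconj p - 1) * g v) y)
    (hyθ : y θ = (c * θ + H θ) ^ pconj p) : ∃ u, IsTWSol p c D h g u := by
  have hpq := holderConjugate_pconj S.hp
  have hK := S.isDrift fun v hv => (hch v hv).le
  have hyK := hy.eqOn_rpow hpq S.isCombustionSource hK hyθ
  have hFO : IsFOSol p c D h g y :=
    { cont := hy.cont
      eqn := hy.eqn
      y0 := by
        have h0 : y 0 = (c * 0 + H 0) ^ pconj p := hyK ⟨le_rfl, S.hθ0.le⟩
        rwa [hK.primitive_zero, Real.zero_rpow hpq.symm.ne_zero] at h0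
      y1 := hy.terminal
      pos := fun v hv => by
        rcases le_or_gt v θ with hvθ | hvθ
        · rw [hyK ⟨hv.1.le, hvθ⟩]
          exact Real.rpow_pos_of_pos (hK.primitive_pos hch ⟨hv.1, hv.2.le⟩) _
        · exact hy.pos hpq S.isCombustionSource ⟨hvθ, hv.2⟩ }
  obtain ⟨u, hu⟩ :=
    exists_isWaveProfile (hFO.continuousOn_waveSlope S) fun v hv => hFO.waveSlope_pos S hv
  exact ⟨u, hFO.isTWSol S hu⟩

/-! ### Admissible speeds -/

theorem CombSetup.rpow_kfun_mul_integral_lt {p θ : ℝ} {D H h g : ℝ → ℝ}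
    (S : CombSetup p θ D H h g) :
    (kfun p * ∫ v in Ioo (0 : ℝ) 1, D v ^ (pconj p - 1) * g v) ^ (1 / pconj p) <
      (pconj p * ∫ v in Ioo (0 : ℝ) 1, D v ^ (pconj p - 1) * g v) ^ (1 / pconj p) := by
  refine kfun_mul_rpow_lt_pconj_mul_rpow S.hp ?_
  rw [← integral_Ioc_eq_integral_Ioo, ← intervalIntegral.integral_of_le zero_le_one]
  exact S.isCombustionSource.integral_pos

theorem CombSetup.exists_isTWSol_of_lt {p θ c₀ : ℝ} {D H h g : ℝ → ℝ}
    (S : CombSetup p θ D H h g) (hc₀ : ∀ v ∈ Icc (0 : ℝ) 1, 0 ≤ c₀ + h v)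
    (hlt : c₀ + H 1 <
      (pconj p * ∫ v in Ioo (0 : ℝ) 1, D v ^ (pconj p - 1) * g v) ^ (1 / pconj p)) :
    ∃ c > c₀, ∃ u, IsTWSol p c D h g u := by
  have hpq := holderConjugate_pconj S.hp
  have hf := S.isCombustionSource
  have hK := S.isDrift hc₀
  rw [← integral_Ioc_eq_integral_Ioo, ← intervalIntegral.integral_of_le zero_le_one] at hlt
  have hK1 : 0 ≤ c₀ + H 1 := by
    simpa only [mul_one] using hK.primitive_nonneg (right_mem_Icc.2 zero_le_one)
  have hKf : (c₀ * 1 + H 1) ^ pconj p <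
      pconj p * ∫ v in (0 : ℝ)..1, D v ^ (pconj p - 1) * g v := by
    rwa [mul_one, ← Real.lt_rpow_inv_iff_of_pos hK1
      (mul_pos hpq.symm.pos hf.integral_pos).le hpq.symm.pos, ← one_div]
  obtain ⟨c, hc, y, hy, hyθ⟩ := exists_pos_speed hpq hf hK hKf
  have hpos : ∀ v ∈ Icc (0 : ℝ) 1, 0 < c + c₀ + h v := fun v hv => by
    linarith [hc₀ v hv]
  refine ⟨c + c₀, lt_add_of_pos_left c₀ hc, S.exists_isTWSol hpos (y := y) ?_ ?_⟩
  · simpa only [add_assoc] using hy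
  · simpa only [add_mul, add_assoc] using hyθ

theorem IsTWSol.speed_le {p θ c d : ℝ} {D H h g u w : ℝ → ℝ} (S : CombSetup p θ D H h g)
    (hch : ∀ v ∈ Icc (0 : ℝ) 1, 0 ≤ c + h v) (hdh : ∀ v ∈ Icc (0 : ℝ) 1, 0 ≤ d + h v)
    (hu : IsTWSol p c D h g u) (hw : IsTWSol p d D h g w) : c ≤ d := by
  have hpq := holderConjugate_pconj S.hp
  have hf := S.isCombustionSource.toIsSource
  have hKc := S.isDrift hch
  have hKd := S.isDrift hdh
  obtain ⟨y, hy⟩ := exists_isBackwardSol hpq hKc.cont hKc.nonneg hf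
  obtain ⟨z, hz⟩ := exists_isBackwardSol hpq hKd.cont hKd.nonneg hf
  exact speed_le_of_apply_eq_rpow hpq ⟨S.hθ0, S.hθ1⟩ hdh
    (hKd.primitive_nonneg ⟨S.hθ0.le, S.hθ1.le⟩) hy (hu.backwardSol_threshold S hch hy)
    hz (hw.backwardSol_threshold S hdh hz)

theorem stmt3_general (p θ c₀ : ℝ) (D H h g : ℝ → ℝ) (S : CombSetup p θ D H h g)
    (hc₀ : ∀ v ∈ Icc (0 : ℝ) 1, 0 ≤ c₀ + h v)
    (hmain : c₀ + H 1 <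
      (pconj p * ∫ v in Ioo (0 : ℝ) 1, D v ^ (pconj p - 1) * g v) ^ (1 / pconj p)) :
    ∃ cstar : ℝ, c₀ < cstar ∧
      (∃ u : ℝ → ℝ, IsTWSol p cstar D h g u) ∧
      ∀ c : ℝ, -sInf (h '' Icc 0 1) < c → (∃ u : ℝ → ℝ, IsTWSol p c D h g u) → c = cstar := by
  obtain ⟨c, hc, u, hu⟩ := S.exists_isTWSol_of_lt hc₀ hmain
  refine ⟨c, hc, ⟨u, hu⟩, fun d hd ⟨w, hw⟩ => ?_⟩
  have hch : ∀ v ∈ Icc (0 : ℝ) 1, 0 ≤ c + h v := fun v hv => by linarith [hc₀ v hv]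
  have hdh : ∀ v ∈ Icc (0 : ℝ) 1, 0 ≤ d + h v := fun v hv =>
    ((neg_sInf_image_lt_iff isCompact_Icc (nonempty_Icc.2 zero_le_one) S.hh).1 hd v hv).le
  exact le_antisymm (hw.speed_le S hdh hch hu) (hu.speed_le S hch hdh hw)

/-- Theorem: Positive wave speed.
If `h > 0` on `[0,1]` and `H(1) ≤ (k(p) ∫₀¹ D^{p'-1} g)^{1/p'}`, then the unique
admissible speed `c*` satisfies `c* > 0 > -h_m`. -/
theorem stmt3 (p θ : ℝ) (D H h g : ℝ → ℝ) (S : CombSetup p θ D H h g)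
    (hhpos : ∀ v ∈ Icc (0 : ℝ) 1, 0 < h v)
    (hmain : H 1 ≤ (kfun p * ∫ v in Ioo (0 : ℝ) 1, D v ^ (pconj p - 1) * g v) ^ (1 / pconj p)) :
    ∃ cstar : ℝ, -sInf (h '' Icc 0 1) < cstar ∧
      (∃ u : ℝ → ℝ, IsTWSol p cstar D h g u) ∧
      (∀ c : ℝ, -sInf (h '' Icc 0 1) < c → (∃ u : ℝ → ℝ, IsTWSol p c D h g u) → c = cstar) ∧
      0 < cstar ∧ -sInf (h '' Icc 0 1) < 0 := by
  obtain ⟨c, hc, hex, huniq⟩ := stmt3_general p θ 0 D H h g S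
    (fun v hv => by linarith [hhpos v hv]) (by linarith [S.rpow_kfun_mul_integral_lt])
  have hneg : -sInf (h '' Icc 0 1) < 0 :=
    (neg_sInf_image_lt_iff isCompact_Icc (nonempty_Icc.2 zero_le_one) S.hh).2 fun v hv => by
      linarith [hhpos v hv]
  exact ⟨c, hneg.trans hc, hex, huniq, hc, hneg⟩
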